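/- arXiv:1902.06404 — 2 statements merged into one kernel-verified Lean document; each statement's English description precedes it below -/
import Mathlib

section
/- In the two-state i.i.d. model, if at least one of the trace lengths m(n) or l(n) is less than or equal to c·n^{2−α} for some constants c > 0 and α > 0, then user 1 has perfect anonymity: the Shannon conditional entropy H(Π(1) | W, Y) tends to +∞ as n → ∞. -/
open MeasureTheory ProbabilityTheory Filter
open scoped ENNReal NNReal

/-- Bernoulli measure on `Bool` with success probability `p`. -/
noncomputable def bern (p : ℝ) : Measure Bool :=
  ENNReal.ofReal p • Measure.dirac true + ENNReal.ofReal (1 - p) • Measure.dirac false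

/-- Joint law of (parameters, actual traces, training traces) in the two-state i.i.d. model:
the parameters `p u` are i.i.d. with law `μP`, and conditionally on the parameters the
`n` actual traces (of length `m`) and training traces (of length `l`) consist of i.i.d.
`Bernoulli (p u)` samples, all mutually independent. -/
noncomputable def twoStateLaw (n m l : ℕ) (μP : Measure ℝ) :
    Measure ((Fin n → ℝ) × (Fin n → Fin m → Bool) × (Fin n → Fin l → Bool)) :=
  (Measure.pi fun _ : Fin n => μP).bind fun p =>
    (Measure.dirac p).prod
      ((Measure.pi fun u : Fin n => Measure.pi fun _ : Fin m => bern (p u)).prod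
        (Measure.pi fun u : Fin n => Measure.pi fun _ : Fin l => bern (p u)))

/-- Shannon conditional entropy `H(A | B)` of discrete random variables `A` and `B`. -/
noncomputable def shCondEntropy {Ω α β : Type*} [MeasurableSpace Ω] (μ : Measure Ω)
    (A : Ω → α) (B : Ω → β) : ℝ :=
  -∑' (a : α) (b : β),
    (μ (A ⁻¹' {a} ∩ B ⁻¹' {b})).toReal *
      Real.log ((μ (A ⁻¹' {a} ∩ B ⁻¹' {b})).toReal / (μ (B ⁻¹' {b})).toReal)


lemma ent_lower {Ω β : Type*} [MeasurableSpace Ω] [Fintype β] (μ : Measure Ω)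
    [IsProbabilityMeasure μ] (n : ℕ) (A : Ω → ℕ) (B : Ω → β) (hA : ∀ ω, A ω < n)
    (hm : ∀ a b, MeasurableSet (A ⁻¹' {a} ∩ B ⁻¹' {b})) (S : ℝ) (hS0 : 0 < S)
    (hS : ∀ g : β → ℕ, (μ {ω | A ω = g (B ω)}).toReal ≤ S) :
    -Real.log S ≤ shCondEntropy μ A B := by
  classical
  set q : ℕ → β → ℝ := fun a b => (μ (A ⁻¹' {a} ∩ B ⁻¹' {b})).toReal with hq
  set r : β → ℝ := fun b => (μ (B ⁻¹' {b})).toReal with hr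
  have hq0 : ∀ a b, 0 ≤ q a b := fun a b => ENNReal.toReal_nonneg
  have hr0 : ∀ b, 0 ≤ r b := fun b => ENNReal.toReal_nonneg
  have hqn : ∀ a, a ∉ Finset.range n → ∀ b, q a b = 0 := by
    intro a ha b
    have : A ⁻¹' {a} ∩ B ⁻¹' {b} = ∅ := by
      ext ω
      simp only [Set.mem_inter_iff, Set.mem_preimage, Set.mem_singleton_iff,
        Set.mem_empty_iff_false, iff_false]
      rintro ⟨h, _⟩
      exact ha (Finset.mem_range.2 (h ▸ hA ω))
    simp [hq, this]
  have hqr : ∀ b, ∑ a ∈ Finset.range n, q a b = r b := by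
    intro b
    have : B ⁻¹' {b} = ⋃ a ∈ Finset.range n, (A ⁻¹' {a} ∩ B ⁻¹' {b}) := by
      ext ω
      simp [hA ω]
    simp only [hq, hr]
    conv_rhs => rw [this]
    rw [measure_biUnion_finset, ENNReal.toReal_sum]
    · intro a _; exact measure_ne_top _ _
    · intro a _ a' _ hne
      refine Set.disjoint_left.2 ?_
      rintro ω ⟨h, _⟩ ⟨h', _⟩
      exact hne (by simp at h h'; rw [← h, ← h'])
    · intro a _; exact hm a b
  have hmB : ∀ b, MeasurableSet (B ⁻¹' {b}) := by
    intro b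
    have : B ⁻¹' {b} = ⋃ a ∈ Finset.range n, (A ⁻¹' {a} ∩ B ⁻¹' {b}) := by
      ext ω
      simp [hA ω]
    rw [this]
    exact Finset.measurableSet_biUnion _ fun a _ => hm a b
  have hr1 : ∑ b, r b = 1 := by
    have : (Set.univ : Set Ω) = ⋃ b ∈ (Finset.univ : Finset β), B ⁻¹' {b} := by
      ext ω; simp
    have h1 : (μ Set.univ).toReal = 1 := by simp
    rw [this, measure_biUnion_finset, ENNReal.toReal_sum] at h1
    · exact h1
    · intro a _; exact measure_ne_top _ _
    · intro a _ a' _ hne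
      refine Set.disjoint_left.2 ?_
      intro ω h h'
      exact hne (by simp at h h'; rw [← h, ← h'])
    · intro b _; exact hmB b
  have hn : 0 < n := by
    obtain ⟨ω⟩ : Nonempty Ω := μ.nonempty_of_neZero
    exact lt_of_le_of_lt (Nat.zero_le _) (hA ω)
  have hmax : ∀ b, ∃ a ∈ Finset.range n, ∀ a' ∈ Finset.range n, q a' b ≤ q a b := fun b =>
    Finset.exists_max_image _ _ ⟨0, Finset.mem_range.2 hn⟩
  choose g hg hgm using hmax
  have hs : ∑ b, q (g b) b ≤ S := by
    have := hS g
    have h2 : {ω | A ω = g (B ω)} = ⋃ b ∈ (Finset.univ : Finset β), (A ⁻¹' {g b} ∩ B ⁻¹' {b}) := by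
      ext ω; simp
    rw [h2, measure_biUnion_finset, ENNReal.toReal_sum] at this
    · exact this
    · intro a _; exact measure_ne_top _ _
    · intro a _ a' _ hne
      refine Set.disjoint_left.2 ?_
      rintro ω ⟨_, h⟩ ⟨_, h'⟩
      exact hne (by simp at h h'; rw [← h, ← h'])
    · intro b _; exact hm _ b
  have key : shCondEntropy μ A B
      = -∑ a ∈ Finset.range n, ∑ b, q a b * Real.log (q a b / r b) := by
    unfold shCondEntropy
    rw [tsum_eq_sum (s := Finset.range n)]
    · simp only [tsum_fintype]; rfl
    · intro a ha
      rw [tsum_fintype]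
      refine Finset.sum_eq_zero fun b _ => ?_
      have := hqn a ha b
      simp only [hq] at this
      rw [this, zero_mul]
  rw [key, neg_le_neg_iff, Finset.sum_comm]
  have hb : ∀ b, ∑ a ∈ Finset.range n, q a b * Real.log (q a b / r b)
      ≤ r b * Real.log S + q (g b) b / S - r b := by
    intro b
    rcases (hr0 b).eq_or_lt with h0 | hpos
    · have : ∀ a ∈ Finset.range n, q a b = 0 := by
        have := hqr b
        rw [← h0, Finset.sum_eq_zero_iff_of_nonneg (fun a _ => hq0 a b)] at this
        exact this
      rw [Finset.sum_eq_zero (fun a ha => by rw [this a ha, zero_mul]), ← h0]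
      have := hq0 (g b) b
      have : 0 ≤ q (g b) b / S := by positivity
      linarith
    · calc _ ≤ ∑ a ∈ Finset.range n, q a b * (Real.log S + q (g b) b / (r b * S) - 1) := by
            refine Finset.sum_le_sum fun a ha => ?_
            rcases (hq0 a b).eq_or_lt with h0 | hqp
            · rw [← h0]; simp
            · refine mul_le_mul_of_nonneg_left ?_ (hq0 a b)
              have h1 : q a b / r b = S * (q a b / (r b * S)) := by field_simp
              have h2 : 0 < q a b / (r b * S) := by positivity
              rw [h1, Real.log_mul hS0.ne' h2.ne']
              have h3 := Real.log_le_sub_one_of_pos h2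
              have h4 : q a b / (r b * S) ≤ q (g b) b / (r b * S) := by
                gcongr; exact hgm b a ha
              linarith
        _ = _ := by
            rw [← Finset.sum_mul, hqr]
            field_simp
  calc _ ≤ ∑ b, (r b * Real.log S + q (g b) b / S - r b) := Finset.sum_le_sum fun b _ => hb b
    _ = Real.log S + (∑ b, q (g b) b) / S - 1 := by
        rw [Finset.sum_sub_distrib, Finset.sum_add_distrib, ← Finset.sum_mul, hr1,
          ← Finset.sum_div, one_mul]
    _ ≤ _ := by
        have : (∑ b, q (g b) b) / S ≤ 1 := by rw [div_le_one hS0]; exact hs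
        linarith

/-- Bernoulli weights. -/
noncomputable def bb (p : ℝ) (b : Bool) : ℝ := if b then p else 1 - p

/-- Weight of a family of traces. -/
noncomputable def tr {n m : ℕ} (p : Fin n → ℝ) (x : Fin n → Fin m → Bool) : ℝ :=
  ∏ v, ∏ j, bb (p v) (x v j)

lemma sum_tr_mul {n m : ℕ} (h : Fin n → Bool → ℝ) :
    ∑ x : Fin n → Fin m → Bool, ∏ v, ∏ j, h v (x v j) = ∏ v, (∑ b, h v b) ^ m := by
  classical
  have h1 : ∀ v, (∑ b, h v b) ^ m = ∑ y : Fin m → Bool, ∏ j, h v (y j) := by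
    intro v
    have := Finset.prod_univ_sum (fun _ : Fin m => (Finset.univ : Finset Bool)) (fun _ b => h v b)
    rw [Finset.prod_const, Finset.card_univ, Fintype.card_fin, Fintype.piFinset_univ] at this
    exact this
  simp_rw [h1]
  have := Finset.prod_univ_sum (fun _ : Fin n => (Finset.univ : Finset (Fin m → Bool)))
    (fun v y => ∏ j, h v (y j))
  rw [this]
  simp

lemma sum_tr {n m : ℕ} (p : Fin n → ℝ) : ∑ x : Fin n → Fin m → Bool, tr p x = 1 := by
  unfold tr
  rw [sum_tr_mul (fun v b => bb (p v) b)]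
  simp [bb]

lemma bb_nonneg {p : ℝ} (hp : p ∈ Set.Icc (0 : ℝ) 1) (b : Bool) : 0 ≤ bb p b := by
  unfold bb; split_ifs
  · exact hp.1
  · linarith [hp.2]

lemma tr_nonneg {n m : ℕ} {p : Fin n → ℝ} (hp : ∀ v, p v ∈ Set.Icc (0 : ℝ) 1)
    (x : Fin n → Fin m → Bool) : 0 ≤ tr p x :=
  Finset.prod_nonneg fun v _ => Finset.prod_nonneg fun _ _ => bb_nonneg (hp v) _

lemma tr_comp {n m : ℕ} (p : Fin n → ℝ) (x : Fin n → Fin m → Bool) (τ : Equiv.Perm (Fin n)) :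
    tr (fun v => p (τ v)) (fun v => x (τ v)) = tr p x := by
  unfold tr
  exact Equiv.prod_comp τ (fun v => ∏ j, bb (p v) (x v j))

/-- angle parametrisation -/
noncomputable def ang (p : ℝ) : ℝ := Real.arcsin (Real.sqrt p)

lemma affinity_one {p q : ℝ} (hp : p ∈ Set.Icc (0 : ℝ) 1) (hq : q ∈ Set.Icc (0 : ℝ) 1) :
    ∑ b, Real.sqrt (bb p b) * Real.sqrt (bb q b) = Real.cos (ang p - ang q) := by
  have hs : ∀ {p : ℝ}, p ∈ Set.Icc (0 : ℝ) 1 → Real.sin (ang p) = Real.sqrt p := by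
    intro p hp
    unfold ang
    rw [Real.sin_arcsin]
    · linarith [Real.sqrt_nonneg p]
    · exact Real.sqrt_le_one.2 hp.2
  have hc : ∀ {p : ℝ}, p ∈ Set.Icc (0 : ℝ) 1 → Real.cos (ang p) = Real.sqrt (1 - p) := by
    intro p hp
    unfold ang
    rw [Real.cos_arcsin, Real.sq_sqrt hp.1]
  rw [Real.cos_sub, hs hp, hs hq, hc hp, hc hq]
  simp [bb]
  ring

lemma sqrt_tr {n m : ℕ} {p : Fin n → ℝ} (hp : ∀ v, p v ∈ Set.Icc (0 : ℝ) 1)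
    (x : Fin n → Fin m → Bool) :
    Real.sqrt (tr p x) = ∏ v, ∏ j, Real.sqrt (bb (p v) (x v j)) := by
  unfold tr
  rw [Real.sqrt_prod]
  · refine Finset.prod_congr rfl fun v _ => ?_
    rw [Real.sqrt_prod]
    exact fun _ _ => bb_nonneg (hp v) _
  · exact fun v _ => Finset.prod_nonneg fun _ _ => bb_nonneg (hp v) _

lemma affinity_tr {n m : ℕ} {p q : Fin n → ℝ} (hp : ∀ v, p v ∈ Set.Icc (0 : ℝ) 1)
    (hq : ∀ v, q v ∈ Set.Icc (0 : ℝ) 1) :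
    ∑ x : Fin n → Fin m → Bool, Real.sqrt (tr p x) * Real.sqrt (tr q x)
      = ∏ v, Real.cos (ang (p v) - ang (q v)) ^ m := by
  simp_rw [sqrt_tr hp, sqrt_tr hq, ← Finset.prod_mul_distrib]
  rw [sum_tr_mul (fun v b => Real.sqrt (bb (p v) b) * Real.sqrt (bb (q v) b))]
  refine Finset.prod_congr rfl fun v _ => ?_
  rw [affinity_one (hp v) (hq v)]

lemma tv_le {α : Type*} [Fintype α] (a b : α → ℝ) (ha : ∀ x, 0 ≤ a x) (hb : ∀ x, 0 ≤ b x)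
    (ha1 : ∑ x, a x = 1) (hb1 : ∑ x, b x = 1) (t : ℝ) (ht : 0 ≤ t)
    (h : 1 - t ^ 2 ≤ ∑ x, Real.sqrt (a x) * Real.sqrt (b x)) :
    ∑ x, |a x - b x| ≤ 3 * t := by
  set c := ∑ x, Real.sqrt (a x) * Real.sqrt (b x) with hc
  have e1 : ∑ x, (|Real.sqrt (a x) - Real.sqrt (b x)|) ^ 2 = 2 - 2 * c := by
    have : ∀ x, (|Real.sqrt (a x) - Real.sqrt (b x)|) ^ 2
        = a x + b x - 2 * (Real.sqrt (a x) * Real.sqrt (b x)) := by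
      intro x
      rw [sq_abs, sub_sq, Real.sq_sqrt (ha x), Real.sq_sqrt (hb x)]; ring
    simp_rw [this]
    rw [Finset.sum_sub_distrib, Finset.sum_add_distrib, ha1, hb1, ← Finset.mul_sum]; ring
  have e2 : ∑ x, (Real.sqrt (a x) + Real.sqrt (b x)) ^ 2 = 2 + 2 * c := by
    have : ∀ x, (Real.sqrt (a x) + Real.sqrt (b x)) ^ 2
        = a x + b x + 2 * (Real.sqrt (a x) * Real.sqrt (b x)) := by
      intro x
      rw [add_sq, Real.sq_sqrt (ha x), Real.sq_sqrt (hb x)]; ring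
    simp_rw [this]
    rw [Finset.sum_add_distrib, Finset.sum_add_distrib, ha1, hb1, ← Finset.mul_sum]; ring
  have hc1 : c ≤ 1 := by
    have : 0 ≤ 2 - 2 * c := by rw [← e1]; positivity
    linarith
  have cs := Finset.sum_mul_sq_le_sq_mul_sq Finset.univ
    (fun x => |Real.sqrt (a x) - Real.sqrt (b x)|) (fun x => Real.sqrt (a x) + Real.sqrt (b x))
  have e3 : ∀ x, |Real.sqrt (a x) - Real.sqrt (b x)| * (Real.sqrt (a x) + Real.sqrt (b x))
      = |a x - b x| := by
    intro x
    have h0 : 0 ≤ Real.sqrt (a x) + Real.sqrt (b x) := by positivity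
    conv_lhs => rw [← abs_of_nonneg h0, ← abs_mul]
    congr 1
    have h1 := Real.sq_sqrt (ha x)
    have h2 := Real.sq_sqrt (hb x)
    nlinarith
  simp_rw [e3] at cs
  rw [e1, e2] at cs
  refine abs_le_of_sq_le_sq' ?_ (by positivity) |>.2
  nlinarith

lemma tr_swap_close {n m : ℕ} {p : Fin n → ℝ} (hp : ∀ v, p v ∈ Set.Icc (0 : ℝ) 1)
    (i u : Fin n) (d : ℝ) (hd : |ang (p i) - ang (p u)| ≤ d) :
    ∑ x : Fin n → Fin m → Bool, |tr p x - tr (fun v => p (Equiv.swap i u v)) x|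
      ≤ 3 * (Real.sqrt m * d) := by
  have hd0 : 0 ≤ d := (abs_nonneg _).trans hd
  refine tv_le _ _ (tr_nonneg hp) (tr_nonneg fun v => hp _) (sum_tr _) (sum_tr _) _
    (by positivity) ?_
  rw [affinity_tr hp (fun v => hp _)]
  rcases eq_or_ne i u with rfl | hne
  · simp; positivity
  have hsub : ∏ v, Real.cos (ang (p v) - ang (p (Equiv.swap i u v))) ^ m
      = ∏ v ∈ {i, u}, Real.cos (ang (p v) - ang (p (Equiv.swap i u v))) ^ m := by
    symm
    refine Finset.prod_subset (Finset.subset_univ _) ?_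
    intro v _ hv
    simp only [Finset.mem_insert, Finset.mem_singleton, not_or] at hv
    rw [Equiv.swap_apply_of_ne_of_ne hv.1 hv.2]
    simp
  rw [hsub, Finset.prod_pair hne, Equiv.swap_apply_left, Equiv.swap_apply_right,
    ← Real.cos_neg (ang (p u) - ang (p i)), neg_sub, ← mul_pow]
  set D := ang (p i) - ang (p u)
  rw [mul_pow (Real.sqrt m) d, Real.sq_sqrt (by positivity)]
  have h1 : 1 - D ^ 2 ≤ Real.cos D * Real.cos D := by
    have := Real.sin_sq_add_cos_sq D
    have := Real.sin_sq_le_sq (x := D)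
    nlinarith
  have h2 : D ^ 2 ≤ d ^ 2 := by
    rw [← sq_abs D]; gcongr
  have h3 : 1 + (m : ℝ) * (Real.cos D * Real.cos D - 1) ≤ (1 + (Real.cos D * Real.cos D - 1)) ^ m :=
    one_add_mul_le_pow (by nlinarith [mul_self_nonneg (Real.cos D)]) m
  rw [add_sub_cancel] at h3
  have : (0:ℝ) ≤ m := by positivity
  nlinarith

/-- Success weight for the guess `g` of the label of user `i`, given parameters `p` for the actual
traces and `q` for the training traces. -/
noncomputable def G2 {n m l : ℕ} (g : (Fin n → Fin l → Bool) × (Fin n → Fin m → Bool) → ℕ)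
    (p q : Fin n → ℝ) (i : Fin n) : ℝ :=
  ((n.factorial : ℝ))⁻¹ * ∑ σ : Equiv.Perm (Fin n), ∑ x : Fin n → Fin m → Bool,
    ∑ w : Fin n → Fin l → Bool,
      if ((σ i : Fin n) : ℕ) = g (w, fun v => x (σ.symm v)) then tr p x * tr q w else 0

section core

variable {n m l : ℕ} (g : (Fin n → Fin l → Bool) × (Fin n → Fin m → Bool) → ℕ)

lemma G2_reindex (p q : Fin n → ℝ) (i : Fin n) (τ : Equiv.Perm (Fin n)) :
    G2 g (fun v => p (τ v)) q i = G2 g p q (τ i) := by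
  unfold G2
  congr 1
  rw [← Equiv.sum_comp (Equiv.mulRight τ)]
  refine Finset.sum_congr rfl fun σ _ => ?_
  rw [← Equiv.sum_comp (Equiv.arrowCongr τ.symm (Equiv.refl (Fin m → Bool)))]
  refine Finset.sum_congr rfl fun x _ => Finset.sum_congr rfl fun w _ => ?_
  have h1 : tr (fun v => p (τ v)) ((Equiv.arrowCongr τ.symm (Equiv.refl (Fin m → Bool))) x)
      = tr p x := by
    rw [← tr_comp p x τ]; rfl
  rw [h1]
  have h2 : (fun v => (Equiv.arrowCongr τ.symm (Equiv.refl (Fin m → Bool))) x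
      (((Equiv.mulRight τ) σ).symm v)) = fun v => x (σ.symm v) := by
    funext v
    simp [Equiv.arrowCongr, Equiv.Perm.mul_def]
  rw [h2]
  exact if_congr (by simp) rfl rfl

lemma avg_le (h : Equiv.Perm (Fin n) → ℝ) (c : ℝ) (hh : ∀ σ, h σ ≤ c) :
    ((n.factorial : ℝ))⁻¹ * ∑ σ, h σ ≤ c := by
  have h1 : ∑ σ, h σ ≤ ∑ _σ : Equiv.Perm (Fin n), c := Finset.sum_le_sum fun σ _ => hh σ
  rw [Finset.sum_const, Finset.card_univ, Fintype.card_perm, Fintype.card_fin, nsmul_eq_mul] at h1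
  have : (0 : ℝ) < n.factorial := by exact_mod_cast n.factorial_pos
  rw [inv_mul_le_iff₀ this]
  exact h1

lemma G2_close_left (p p' q : Fin n → ℝ) (hq : ∀ v, q v ∈ Set.Icc (0 : ℝ) 1) (i : Fin n) :
    G2 g p q i ≤ G2 g p' q i + ∑ x : Fin n → Fin m → Bool, |tr p x - tr p' x| := by
  rw [← sub_le_iff_le_add']
  unfold G2
  rw [← mul_sub, ← Finset.sum_sub_distrib]
  refine avg_le _ _ fun σ => ?_
  rw [← Finset.sum_sub_distrib]
  refine Finset.sum_le_sum fun x _ => ?_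
  rw [← Finset.sum_sub_distrib]
  have : |tr p x - tr p' x| = ∑ w : Fin n → Fin l → Bool, |tr p x - tr p' x| * tr q w := by
    rw [← Finset.mul_sum, sum_tr, mul_one]
  rw [this]
  refine Finset.sum_le_sum fun w _ => ?_
  have h0 := tr_nonneg hq w
  split_ifs
  · rw [← sub_mul]; gcongr; exact le_abs_self _
  · rw [sub_zero]; positivity

lemma G2_close_right (p q q' : Fin n → ℝ) (hp : ∀ v, p v ∈ Set.Icc (0 : ℝ) 1) (i : Fin n) :
    G2 g p q i ≤ G2 g p q' i + ∑ x : Fin n → Fin l → Bool, |tr q x - tr q' x| := by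
  rw [← sub_le_iff_le_add']
  unfold G2
  rw [← mul_sub, ← Finset.sum_sub_distrib]
  refine avg_le _ _ fun σ => ?_
  rw [Finset.sum_comm, Finset.sum_comm (s := (Finset.univ : Finset (Fin n → Fin m → Bool))),
    ← Finset.sum_sub_distrib]
  refine Finset.sum_le_sum fun w _ => ?_
  rw [← Finset.sum_sub_distrib]
  have : |tr q w - tr q' w| = ∑ x : Fin n → Fin m → Bool, tr p x * |tr q w - tr q' w| := by
    rw [← Finset.sum_mul, sum_tr, one_mul]
  rw [this]
  refine Finset.sum_le_sum fun x _ => ?_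
  have h0 := tr_nonneg hp x
  split_ifs
  · rw [← mul_sub]; gcongr; exact le_abs_self _
  · rw [sub_zero]; positivity

lemma G2_nonneg (p q : Fin n → ℝ) (hp : ∀ v, p v ∈ Set.Icc (0 : ℝ) 1)
    (hq : ∀ v, q v ∈ Set.Icc (0 : ℝ) 1) (i : Fin n) : 0 ≤ G2 g p q i := by
  unfold G2
  refine mul_nonneg (by positivity) ?_
  refine Finset.sum_nonneg fun σ _ => Finset.sum_nonneg fun x _ => Finset.sum_nonneg fun w _ => ?_
  have h0 := tr_nonneg hp x
  have h1 := tr_nonneg hq w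
  split_ifs <;> positivity

lemma G2_sum_le (p q : Fin n → ℝ) (hp : ∀ v, p v ∈ Set.Icc (0 : ℝ) 1)
    (hq : ∀ v, q v ∈ Set.Icc (0 : ℝ) 1) : ∑ i, G2 g p q i ≤ 1 := by
  unfold G2
  rw [← Finset.mul_sum, Finset.sum_comm]
  refine avg_le _ _ fun σ => ?_
  have e : (1 : ℝ) = ∑ x : Fin n → Fin m → Bool, ∑ w : Fin n → Fin l → Bool, tr p x * tr q w := by
    simp_rw [← Finset.mul_sum, sum_tr, mul_one, sum_tr]
  rw [e, Finset.sum_comm]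
  refine Finset.sum_le_sum fun x _ => ?_
  rw [Finset.sum_comm]
  refine Finset.sum_le_sum fun w _ => ?_
  have h0 := tr_nonneg hp x
  have h1 := tr_nonneg hq w
  rw [← Finset.sum_filter, Finset.sum_const, nsmul_eq_mul]
  have hcard : (Finset.univ.filter fun i : Fin n =>
      ((σ i : Fin n) : ℕ) = g (w, fun v => x (σ.symm v))).card ≤ 1 := by
    refine Finset.card_le_one.2 ?_
    intro a ha b hb
    simp only [Finset.mem_filter, Finset.mem_univ, true_and] at ha hb
    exact σ.injective (Fin.ext (ha.trans hb.symm))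
  have hc' : ((Finset.univ.filter fun i : Fin n =>
      ((σ i : Fin n) : ℕ) = g (w, fun v => x (σ.symm v))).card : ℝ) ≤ 1 := by exact_mod_cast hcard
  have := mul_nonneg h0 h1
  nlinarith

lemma tr_meas (x : Fin n → Fin m → Bool) : Measurable fun p : Fin n → ℝ => tr p x := by
  unfold tr
  refine Finset.measurable_prod _ fun v _ => Finset.measurable_prod _ fun j _ => ?_
  unfold bb
  split_ifs <;> fun_prop

lemma G2_meas (i : Fin n) : Measurable fun p : Fin n → ℝ => G2 g p p i := by
  unfold G2
  refine Measurable.const_mul ?_ _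
  refine Finset.measurable_sum _ fun σ _ => Finset.measurable_sum _ fun x _ =>
    Finset.measurable_sum _ fun w _ => ?_
  split_ifs
  · exact (tr_meas x).mul (tr_meas w)
  · exact measurable_const

/-- bin size -/
noncomputable def bsz (bin : ℝ → ℕ) (p : Fin n → ℝ) (i : Fin n) : ℝ :=
  ∑ u, if bin (p u) = bin (p i) then (1 : ℝ) else 0

/-- weights -/
noncomputable def wt (bin : ℝ → ℕ) (p : Fin n → ℝ) (i u : Fin n) : ℝ :=
  if bin (p u) = bin (p i) then (bsz bin p i)⁻¹ else 0

lemma bsz_ge (bin : ℝ → ℕ) (p : Fin n → ℝ) (i : Fin n) : 1 ≤ bsz bin p i := by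
  unfold bsz
  have := Finset.single_le_sum (f := fun u => if bin (p u) = bin (p i) then (1 : ℝ) else 0)
    (fun u _ => by split_ifs <;> norm_num) (Finset.mem_univ i)
  simpa using this

lemma wt_nonneg (bin : ℝ → ℕ) (p : Fin n → ℝ) (i u : Fin n) : 0 ≤ wt bin p i u := by
  have := bsz_ge bin p i
  unfold wt; split_ifs <;> positivity

lemma wt_le (bin : ℝ → ℕ) (p : Fin n → ℝ) (i u : Fin n) : wt bin p i u ≤ (bsz bin p i)⁻¹ := by
  have := bsz_ge bin p i
  unfold wt; split_ifs
  · exact le_rfl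
  · positivity

lemma bsz_inv_le (bin : ℝ → ℕ) (p : Fin n → ℝ) (i : Fin n) : (bsz bin p i)⁻¹ ≤ 1 :=
  inv_le_one_of_one_le₀ (bsz_ge bin p i)

lemma wt_sum (bin : ℝ → ℕ) (p : Fin n → ℝ) (i : Fin n) : ∑ u, wt bin p i u = 1 := by
  have h := bsz_ge bin p i
  have : ∀ u, wt bin p i u = (if bin (p u) = bin (p i) then (1 : ℝ) else 0) * (bsz bin p i)⁻¹ := by
    intro u; unfold wt; split_ifs <;> simp
  simp_rw [this]
  rw [← Finset.sum_mul]
  change bsz bin p i * _ = 1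
  exact mul_inv_cancel₀ (by linarith)

lemma bsz_comp (bin : ℝ → ℕ) (p : Fin n → ℝ) (i : Fin n) (τ : Equiv.Perm (Fin n)) :
    bsz bin (fun v => p (τ v)) i = bsz bin p (τ i) := by
  unfold bsz
  exact Equiv.sum_comp τ (fun u => if bin (p u) = bin (p (τ i)) then (1 : ℝ) else 0)

lemma wt_comp (bin : ℝ → ℕ) (p : Fin n → ℝ) (i u : Fin n) :
    wt bin (fun v => p (Equiv.swap i u v)) i u = wt bin p i u := by
  unfold wt
  rw [bsz_comp]
  simp only [Equiv.swap_apply_left, Equiv.swap_apply_right]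
  by_cases h : bin (p u) = bin (p i)
  · rw [if_pos h, if_pos h.symm]
    unfold bsz
    rw [h]
  · rw [if_neg h, if_neg (fun h' => h h'.symm)]

lemma sum_bsz_inv (bin : ℝ → ℕ) (K : ℕ) (hK : ∀ x, bin x < K) (p : Fin n → ℝ) :
    ∑ i, (bsz bin p i)⁻¹ ≤ K := by
  classical
  rw [← Finset.sum_fiberwise_of_maps_to (s := Finset.univ) (t := Finset.range K)
    (g := fun i => bin (p i)) (fun i _ => Finset.mem_range.2 (hK _))]
  calc _ ≤ ∑ _b ∈ Finset.range K, (1 : ℝ) := by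
        refine Finset.sum_le_sum fun b _ => ?_
        have : ∀ i ∈ Finset.univ.filter (fun i => bin (p i) = b), (bsz bin p i)⁻¹
            = ((Finset.univ.filter (fun i => bin (p i) = b)).card : ℝ)⁻¹ := by
          intro i hi
          simp only [Finset.mem_filter, Finset.mem_univ, true_and] at hi
          unfold bsz
          rw [hi, Finset.sum_boole]
        rw [Finset.sum_congr rfl this, Finset.sum_const, nsmul_eq_mul]
        exact mul_inv_le_one
    _ = _ := by simp

lemma bsz_meas (bin : ℝ → ℕ) (hb : Measurable bin) (i : Fin n) :
    Measurable fun p : Fin n → ℝ => bsz bin p i := by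
  unfold bsz
  refine Finset.measurable_sum _ fun u _ => ?_
  refine Measurable.ite ?_ measurable_const measurable_const
  exact measurableSet_eq_fun (hb.comp (measurable_pi_apply u)) (hb.comp (measurable_pi_apply i))

lemma wt_meas (bin : ℝ → ℕ) (hb : Measurable bin) (i u : Fin n) :
    Measurable fun p : Fin n → ℝ => wt bin p i u := by
  unfold wt
  refine Measurable.ite ?_ (bsz_meas bin hb i).inv measurable_const
  exact measurableSet_eq_fun (hb.comp (measurable_pi_apply u)) (hb.comp (measurable_pi_apply i))

lemma core_bound (ν : Measure (Fin n → ℝ)) [IsProbabilityMeasure ν]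
    (hinv : ∀ τ : Equiv.Perm (Fin n), MeasurePreserving (fun (p : Fin n → ℝ) v => p (τ v)) ν ν)
    (hsupp : ∀ᵐ p ∂ν, ∀ v, p v ∈ Set.Icc (0 : ℝ) 1)
    (bin : ℝ → ℕ) (hb : Measurable bin) (K : ℕ) (hK : ∀ x, bin x < K) (ε : ℝ)
    (i : Fin n)
    (hε : (∀ p : Fin n → ℝ, (∀ v, p v ∈ Set.Icc (0 : ℝ) 1) → ∀ u, bin (p u) = bin (p i) →
        ∑ x : Fin n → Fin m → Bool, |tr p x - tr (fun v => p (Equiv.swap i u v)) x| ≤ ε) ∨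
      (∀ p : Fin n → ℝ, (∀ v, p v ∈ Set.Icc (0 : ℝ) 1) → ∀ u, bin (p u) = bin (p i) →
        ∑ x : Fin n → Fin l → Bool, |tr p x - tr (fun v => p (Equiv.swap i u v)) x| ≤ ε)) :
    ∫ p, G2 g p p i ∂ν ≤ K / n + ε := by
  have hn : 0 < n := i.pos
  have hn' : (0 : ℝ) < n := by exact_mod_cast hn
  have hG1 : ∀ p : Fin n → ℝ, (∀ v, p v ∈ Set.Icc (0 : ℝ) 1) → ∀ u, G2 g p p u ≤ 1 := by
    intro p hp u
    exact (Finset.single_le_sum (f := fun u => G2 g p p u) (fun u _ => G2_nonneg g p p hp hp u)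
      (Finset.mem_univ u)).trans (G2_sum_le g p p hp hp)
  have hwt1 : ∀ p u, wt bin p i u ≤ 1 := fun p u => (wt_le bin p i u).trans (bsz_inv_le bin p i)
  have iwt : ∀ u, Integrable (fun p => wt bin p i u) ν := fun u =>
    Integrable.of_bound (wt_meas bin hb i u).aestronglyMeasurable 1 (ae_of_all _ fun p => by
      rw [Real.norm_of_nonneg (wt_nonneg bin p i u)]; exact hwt1 p u)
  have ibs : ∀ u, Integrable (fun p => (bsz bin p u)⁻¹) ν := fun u =>
    Integrable.of_bound (bsz_meas bin hb u).inv.aestronglyMeasurable 1 (ae_of_all _ fun p => by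
      have := bsz_ge bin p u
      rw [Real.norm_of_nonneg (by positivity)]; exact bsz_inv_le bin p u)
  have iwG : ∀ u u', Integrable (fun p => wt bin p i u * G2 g p p u') ν := fun u u' =>
    Integrable.of_bound ((wt_meas bin hb i u).mul (G2_meas g u')).aestronglyMeasurable 1 (by
      filter_upwards [hsupp] with p hp
      have h1 := wt_nonneg bin p i u
      have h2 := G2_nonneg g p p hp hp u'
      rw [Real.norm_of_nonneg (mul_nonneg h1 h2)]
      exact mul_le_one₀ (hwt1 p u) h2 (hG1 p hp u'))
  have step : ∀ u, ∫ p, wt bin p i u * G2 g p p i ∂ν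
      ≤ ∫ p, (wt bin p i u * G2 g p p u + ε * wt bin p i u) ∂ν := by
    intro u
    rcases hε with hε | hε
    · refine integral_mono_ae (iwG u i) ((iwG u u).add ((iwt u).const_mul ε)) ?_
      filter_upwards [hsupp] with p hp
      by_cases hbin : bin (p u) = bin (p i)
      · have h1 := G2_close_left g p (fun v => p (Equiv.swap i u v)) p hp i
        rw [G2_reindex, Equiv.swap_apply_left] at h1
        have h2 := hε p hp u hbin
        have h3 := wt_nonneg bin p i u
        have h4 : G2 g p p i ≤ G2 g p p u + ε := by linarith
        have := mul_le_mul_of_nonneg_left h4 h3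
        linarith
      · simp [wt, hbin]
    · have hcomp : ∫ p, wt bin p i u * G2 g p p u ∂ν
          = ∫ p, wt bin p i u * G2 g (fun v => p (Equiv.swap i u v))
              (fun v => p (Equiv.swap i u v)) u ∂ν := by
        conv_lhs => rw [← (hinv (Equiv.swap i u)).map_eq]
        rw [integral_map (f := fun p => wt bin p i u * G2 g p p u)
          (hinv (Equiv.swap i u)).measurable.aemeasurable
          ((wt_meas bin hb i u).mul (G2_meas g u)).aestronglyMeasurable]
        refine integral_congr_ae (ae_of_all _ fun p => ?_)
        simp only [wt_comp]
      have icomp : Integrable (fun p => wt bin p i u * G2 g (fun v => p (Equiv.swap i u v))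
              (fun v => p (Equiv.swap i u v)) u) ν := by
        have := (hinv (Equiv.swap i u)).integrable_comp_of_integrable (iwG u u)
        refine this.congr (ae_of_all _ fun p => ?_)
        simp only [Function.comp, wt_comp]
      rw [integral_add (iwG u u) ((iwt u).const_mul ε), hcomp,
        ← integral_add icomp ((iwt u).const_mul ε)]
      refine integral_mono_ae (iwG u i) (icomp.add ((iwt u).const_mul ε)) ?_
      filter_upwards [hsupp] with p hp
      by_cases hbin : bin (p u) = bin (p i)
      · have h1 := G2_close_right g p p (fun v => p (Equiv.swap i u v)) hp i
        have h5 := G2_reindex g (fun v => p (Equiv.swap i u v)) (fun v => p (Equiv.swap i u v)) i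
          (Equiv.swap i u)
        simp only [Equiv.swap_apply_self, Equiv.swap_apply_left] at h5
        have h2 := hε p hp u hbin
        have h3 := wt_nonneg bin p i u
        have h4 : G2 g p p i ≤ G2 g (fun v => p (Equiv.swap i u v))
              (fun v => p (Equiv.swap i u v)) u + ε := by
          rw [← h5]; linarith
        have := mul_le_mul_of_nonneg_left h4 h3
        linarith
      · simp [wt, hbin]
  have hbs : ∀ u, ∫ p, (bsz bin p u)⁻¹ ∂ν = ∫ p, (bsz bin p i)⁻¹ ∂ν := by
    intro u
    conv_rhs => rw [← (hinv (Equiv.swap i u)).map_eq]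
    rw [integral_map (f := fun p => (bsz bin p i)⁻¹)
          (hinv (Equiv.swap i u)).measurable.aemeasurable
          (bsz_meas bin hb i).inv.aestronglyMeasurable]
    refine integral_congr_ae (ae_of_all _ fun p => ?_)
    simp only [bsz_comp, Equiv.swap_apply_left]
  have hbs2 : ∫ p, (bsz bin p i)⁻¹ ∂ν ≤ K / n := by
    rw [le_div_iff₀ hn']
    calc _ = ∑ u : Fin n, ∫ p, (bsz bin p u)⁻¹ ∂ν := by
          simp_rw [hbs]; simp; ring
      _ = ∫ p, ∑ u : Fin n, (bsz bin p u)⁻¹ ∂ν := (integral_finsetSum _ fun u _ => ibs u).symm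
      _ ≤ ∫ _p, (K : ℝ) ∂ν := integral_mono (integrable_finsetSum _ fun u _ => ibs u)
          (integrable_const _) fun p => sum_bsz_inv bin K hK p
      _ = K := by simp
  calc ∫ p, G2 g p p i ∂ν = ∫ p, ∑ u, wt bin p i u * G2 g p p i ∂ν := by
        refine integral_congr_ae (ae_of_all _ fun p => ?_)
        simp only [← Finset.sum_mul, wt_sum, one_mul]
    _ = ∑ u, ∫ p, wt bin p i u * G2 g p p i ∂ν := integral_finsetSum _ fun u _ => iwG u i
    _ ≤ ∑ u, ∫ p, (wt bin p i u * G2 g p p u + ε * wt bin p i u) ∂ν :=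
        Finset.sum_le_sum fun u _ => step u
    _ = ∫ p, ∑ u, (wt bin p i u * G2 g p p u + ε * wt bin p i u) ∂ν :=
        (integral_finsetSum _ fun u _ => (iwG u u).add ((iwt u).const_mul ε)).symm
    _ ≤ ∫ p, ((bsz bin p i)⁻¹ + ε) ∂ν := by
        refine integral_mono_ae
          (integrable_finsetSum _ fun u _ => (iwG u u).add ((iwt u).const_mul ε))
          ((ibs i).add (integrable_const _)) ?_
        filter_upwards [hsupp] with p hp
        rw [Finset.sum_add_distrib, ← Finset.mul_sum, wt_sum, mul_one]
        have : ∑ u, wt bin p i u * G2 g p p u ≤ ∑ u, (bsz bin p i)⁻¹ * G2 g p p u :=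
          Finset.sum_le_sum fun u _ =>
            mul_le_mul_of_nonneg_right (wt_le bin p i u) (G2_nonneg g p p hp hp u)
        rw [← Finset.mul_sum] at this
        have h2 := bsz_ge bin p i
        have h3 : (bsz bin p i)⁻¹ * ∑ u, G2 g p p u ≤ (bsz bin p i)⁻¹ * 1 :=
          mul_le_mul_of_nonneg_left (G2_sum_le g p p hp hp) (by positivity)
        linarith
    _ ≤ _ := by
        rw [integral_add (ibs i) (integrable_const _)]
        simp only [integral_const, probReal_univ, one_smul]
        linarith

end core

instance bern_finite (p : ℝ) : IsFiniteMeasure (bern p) := by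
  unfold bern
  refine ⟨?_⟩
  simp

lemma bern_singleton (p : ℝ) (b : Bool) : bern p {b} = ENNReal.ofReal (bb p b) := by
  cases b <;> simp [bern, bb]

lemma pi_bern_singleton {n m : ℕ} {p : Fin n → ℝ} (hp : ∀ v, p v ∈ Set.Icc (0 : ℝ) 1)
    (x : Fin n → Fin m → Bool) :
    (Measure.pi fun u : Fin n => Measure.pi fun _ : Fin m => bern (p u)) {x}
      = ENNReal.ofReal (tr p x) := by
  rw [Measure.pi_singleton]
  unfold tr
  rw [ENNReal.ofReal_prod_of_nonneg
    (fun v _ => Finset.prod_nonneg fun _ _ => bb_nonneg (hp v) _)]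
  refine Finset.prod_congr rfl fun v _ => ?_
  rw [Measure.pi_singleton, ENNReal.ofReal_prod_of_nonneg (fun _ _ => bb_nonneg (hp v) _)]
  exact Finset.prod_congr rfl fun j _ => bern_singleton _ _

open Classical in
lemma twoState_apply {n m l : ℕ} (μP : Measure ℝ) [IsProbabilityMeasure μP]
    (hsupp : ∀ᵐ p ∂(Measure.pi fun _ : Fin n => μP), ∀ v, p v ∈ Set.Icc (0 : ℝ) 1)
    (hne : twoStateLaw n m l μP ≠ 0)
    (T : Set ((Fin n → Fin m → Bool) × (Fin n → Fin l → Bool))) :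
    twoStateLaw n m l μP (Prod.snd ⁻¹' T) =
      ∫⁻ p, ENNReal.ofReal (∑ x, ∑ w, if (x, w) ∈ T then tr p x * tr p w else 0)
        ∂(Measure.pi fun _ : Fin n => μP) := by
  unfold twoStateLaw at hne ⊢
  rw [Measure.bind_apply (measurable_snd T.toFinite.measurableSet)]
  · refine lintegral_congr_ae ?_
    filter_upwards [hsupp] with p hp
    have : (Prod.snd ⁻¹' T : Set ((Fin n → ℝ) × (Fin n → Fin m → Bool) × (Fin n → Fin l → Bool)))
        = Set.univ ×ˢ T := by ext; simp
    rw [this, Measure.prod_prod, measure_univ, one_mul, ← lintegral_indicator_one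
      T.toFinite.measurableSet, lintegral_fintype, Fintype.sum_prod_type, ENNReal.ofReal_sum_of_nonneg]
    · refine Finset.sum_congr rfl fun x _ => ?_
      rw [ENNReal.ofReal_sum_of_nonneg]
      · refine Finset.sum_congr rfl fun w _ => ?_
        rw [← Set.singleton_prod_singleton, Measure.prod_prod, pi_bern_singleton hp,
          pi_bern_singleton hp, ← ENNReal.ofReal_mul (tr_nonneg hp x)]
        by_cases h : (x, w) ∈ T <;> simp [h]
      · intro w _
        have h0 := tr_nonneg hp x
        have h1 := tr_nonneg hp w
        split_ifs <;> positivity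
    · intro x _
      refine Finset.sum_nonneg fun w _ => ?_
      have h0 := tr_nonneg hp x
      have h1 := tr_nonneg hp w
      split_ifs <;> positivity
  · by_contra h
    apply hne
    unfold Measure.bind
    rw [Measure.map_of_not_aemeasurable h, Measure.join_zero]

lemma pi_perm {n : ℕ} (μP : Measure ℝ) [IsProbabilityMeasure μP] (τ : Equiv.Perm (Fin n)) :
    MeasurePreserving (fun (p : Fin n → ℝ) v => p (τ v))
      (Measure.pi fun _ : Fin n => μP) (Measure.pi fun _ : Fin n => μP) := by
  have := measurePreserving_piCongrLeft (fun _ : Fin n => μP) τ.symm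
  convert this using 1
  funext p v
  have h := Equiv.piCongrLeft_apply_apply (fun _ : Fin n => ℝ) τ.symm p (τ v)
  simp only [Equiv.symm_apply_apply] at h
  exact h.symm

lemma guess_le {n m l : ℕ} (hn : 0 < n) (μP : Measure ℝ) [IsProbabilityMeasure μP]
    (hP01 : ∀ᵐ x ∂μP, x ∈ Set.Icc (0 : ℝ) 1)
    {Ω : Type} [MeasurableSpace Ω] (μ : Measure Ω) [IsProbabilityMeasure μ]
    (P : Ω → Fin n → ℝ) (X : Ω → Fin n → Fin m → Bool) (W : Ω → Fin n → Fin l → Bool)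
    (prm : Ω → Equiv.Perm (Fin n))
    (hP : Measurable P) (hX : Measurable X) (hW : Measurable W)
    (hprm : ∀ σ : Equiv.Perm (Fin n), MeasurableSet {ω | prm ω = σ})
    (hjoint : ∀ (σ : Equiv.Perm (Fin n))
        (s : Set ((Fin n → ℝ) × (Fin n → Fin m → Bool) × (Fin n → Fin l → Bool))),
        MeasurableSet s →
        μ {ω | prm ω = σ ∧ (P ω, X ω, W ω) ∈ s} =
          ((n.factorial : ℝ≥0∞))⁻¹ * twoStateLaw n m l μP s)
    (g : (Fin n → Fin l → Bool) × (Fin n → Fin m → Bool) → ℕ) (k : ℕ) (hk : 0 < k) (M : ℕ)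
    (hM : M = m ∨ M = l) :
    (μ {ω | ((prm ω ⟨0, hn⟩ : Fin n) : ℕ) = g (W ω, fun v => X ω ((prm ω).symm v))}).toReal
      ≤ ((k + 1 : ℕ) : ℝ) / n + 3 * (Real.sqrt M * (2 / k)) := by
  classical
  set ν := Measure.pi fun _ : Fin n => μP with hν
  have hsupp : ∀ᵐ p ∂ν, ∀ v, p v ∈ Set.Icc (0 : ℝ) 1 := by
    rw [ae_all_iff]
    intro v
    exact (Measure.tendsto_eval_ae_ae (μ := fun _ : Fin n => μP) (i := v)).eventually hP01
  have hne : twoStateLaw n m l μP ≠ 0 := by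
    intro h0
    have : μ (⋃ σ : Equiv.Perm (Fin n), {ω | prm ω = σ}) ≤ 0 := by
      refine (measure_iUnion_le _).trans ?_
      rw [tsum_fintype]
      refine (Finset.sum_eq_zero fun σ _ => ?_).le
      have := hjoint σ Set.univ MeasurableSet.univ
      simpa [h0] using this
    have h2 : (⋃ σ : Equiv.Perm (Fin n), {ω | prm ω = σ}) = Set.univ := by
      ext ω; simp
    rw [h2, measure_univ] at this
    exact absurd this (by simp)
  set T : Equiv.Perm (Fin n) → Set ((Fin n → Fin m → Bool) × (Fin n → Fin l → Bool)) :=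
    fun σ => {xw | ((σ ⟨0, hn⟩ : Fin n) : ℕ) = g (xw.2, fun v => xw.1 (σ.symm v))} with hT
  have hTm : ∀ σ, MeasurableSet (Prod.snd ⁻¹' T σ :
      Set ((Fin n → ℝ) × (Fin n → Fin m → Bool) × (Fin n → Fin l → Bool))) := fun σ =>
    measurable_snd (T σ).toFinite.measurableSet
  have hset : {ω | ((prm ω ⟨0, hn⟩ : Fin n) : ℕ) = g (W ω, fun v => X ω ((prm ω).symm v))}
      = ⋃ σ ∈ (Finset.univ : Finset (Equiv.Perm (Fin n))),
        {ω | prm ω = σ ∧ (P ω, X ω, W ω) ∈ (Prod.snd ⁻¹' T σ :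
      Set ((Fin n → ℝ) × (Fin n → Fin m → Bool) × (Fin n → Fin l → Bool)))} := by
    ext ω
    simp [hT]
  have hPXW : Measurable fun ω => (P ω, X ω, W ω) := hP.prodMk (hX.prodMk hW)
  have e1 : μ {ω | ((prm ω ⟨0, hn⟩ : Fin n) : ℕ) = g (W ω, fun v => X ω ((prm ω).symm v))}
      = ∫⁻ p, ENNReal.ofReal (G2 g p p ⟨0, hn⟩) ∂ν := by
    rw [hset, measure_biUnion_finset]
    · simp_rw [hjoint _ _ (hTm _), twoState_apply μP hsupp hne]
      rw [← Finset.mul_sum, ← lintegral_finsetSum, ← lintegral_const_mul]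
      · refine lintegral_congr_ae ?_
        filter_upwards [hsupp] with p hp
        unfold G2
        have hf : (0 : ℝ) < n.factorial := by exact_mod_cast n.factorial_pos
        rw [ENNReal.ofReal_mul (by positivity), ENNReal.ofReal_inv_of_pos hf,
          ENNReal.ofReal_natCast, ENNReal.ofReal_sum_of_nonneg]
        · congr 1
          refine Finset.sum_congr rfl fun σ _ => ?_
          congr 1
          refine Finset.sum_congr rfl fun x _ => Finset.sum_congr rfl fun w _ => ?_
          by_cases h : (x, w) ∈ T σ
          · rw [if_pos h]; exact (if_pos h).symm
          · rw [if_neg h]; exact (if_neg h).symm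
        · intro σ _
          refine Finset.sum_nonneg fun x _ => Finset.sum_nonneg fun w _ => ?_
          have h0 := tr_nonneg hp x
          have h1 := tr_nonneg hp w
          split_ifs <;> positivity
      · refine Finset.measurable_sum _ fun σ _ => ENNReal.measurable_ofReal.comp ?_
        refine Finset.measurable_sum _ fun x _ => Finset.measurable_sum _ fun w _ => ?_
        split_ifs
        · exact (tr_meas x).mul (tr_meas w)
        · exact measurable_const
      · intro σ _
        refine ENNReal.measurable_ofReal.comp ?_
        refine Finset.measurable_sum _ fun x _ => Finset.measurable_sum _ fun w _ => ?_
        split_ifs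
        · exact (tr_meas x).mul (tr_meas w)
        · exact measurable_const
    · intro a _ a' _ hne
      refine Set.disjoint_left.2 ?_
      rintro ω ⟨h, _⟩ ⟨h', _⟩
      exact hne (h.symm.trans h')
    · intro σ _
      exact (hprm σ).inter (hPXW (hTm σ))
  have e2 : (μ {ω | ((prm ω ⟨0, hn⟩ : Fin n) : ℕ)
      = g (W ω, fun v => X ω ((prm ω).symm v))}).toReal = ∫ p, G2 g p p ⟨0, hn⟩ ∂ν := by
    rw [e1, integral_eq_lintegral_of_nonneg_ae _ (G2_meas g _).aestronglyMeasurable]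
    filter_upwards [hsupp] with p hp
    exact G2_nonneg g p p hp hp _
  rw [e2]
  have hk' : (0 : ℝ) < k := by exact_mod_cast hk
  have hang0 : ∀ x, 0 ≤ ang x := fun x => Real.arcsin_nonneg.2 (Real.sqrt_nonneg x)
  have hang1 : ∀ x, ang x ≤ 2 := fun x =>
    (Real.arcsin_le_pi_div_two _).trans (by linarith [Real.pi_le_four])
  have hclose : ∀ x y, ⌊ang x * (k / 2)⌋₊ = ⌊ang y * (k / 2)⌋₊ → |ang y - ang x| ≤ 2 / k := by
    intro x y h
    have a1 := Nat.floor_le (mul_nonneg (hang0 x) (show (0 : ℝ) ≤ k / 2 by positivity))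
    have a2 := Nat.lt_floor_add_one (ang x * (k / 2))
    have a3 := Nat.floor_le (mul_nonneg (hang0 y) (show (0 : ℝ) ≤ k / 2 by positivity))
    have a4 := Nat.lt_floor_add_one (ang y * (k / 2))
    rw [h] at a1 a2
    rw [abs_le, ← neg_div, div_le_iff₀ hk', le_div_iff₀ hk']
    constructor <;> nlinarith
  refine core_bound g ν (fun τ => pi_perm μP τ) hsupp (fun x => ⌊ang x * (k / 2)⌋₊) ?_ (k + 1) ?_
    _ _ ?_
  · refine Nat.measurable_floor.comp ?_
    refine Measurable.mul_const ?_ _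
    exact Real.measurable_arcsin.comp Real.continuous_sqrt.measurable
  · intro x
    have : ⌊ang x * (k / 2)⌋₊ ≤ k := by
      refine Nat.floor_le_of_le ?_
      have := mul_le_mul_of_nonneg_right (hang1 x) (show (0 : ℝ) ≤ k / 2 by positivity)
      linarith
    exact Nat.lt_succ_of_le this
  · rcases hM with rfl | rfl
    · left
      intro p hp u h
      exact tr_swap_close hp _ _ _ (hclose _ _ h)
    · right
      intro p hp u h
      exact tr_swap_close hp _ _ _ (hclose _ _ h)

lemma rate_bound (c α : ℝ) (hc : 0 < c) (hα : 0 < α) (n : ℕ) (hn : 0 < n) (M : ℕ)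
    (hM : (M : ℝ) ≤ c * (n : ℝ) ^ ((2 : ℝ) - α)) :
    ∃ k : ℕ, 0 < k ∧ ((k + 1 : ℕ) : ℝ) / n + 3 * (Real.sqrt M * (2 / k)) ≤
      (n : ℝ) ^ (-(min α 1 / 4)) + 2 * (n : ℝ)⁻¹
        + 6 * Real.sqrt c * (n : ℝ) ^ (-(min α 1 / 4)) := by
  set β := min α 1 with hβ
  have hn1 : (1 : ℝ) ≤ n := by exact_mod_cast hn
  have hn0 : (0 : ℝ) < n := by linarith
  have hr : 0 < (n : ℝ) ^ (1 - β / 4) := Real.rpow_pos_of_pos hn0 _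
  refine ⟨⌈(n : ℝ) ^ (1 - β / 4)⌉₊, Nat.ceil_pos.2 hr, ?_⟩
  set k := ⌈(n : ℝ) ^ (1 - β / 4)⌉₊ with hk
  have hk1 : (n : ℝ) ^ (1 - β / 4) ≤ k := Nat.le_ceil _
  have hk2 : (k : ℝ) < (n : ℝ) ^ (1 - β / 4) + 1 := Nat.ceil_lt_add_one hr.le
  have hk0 : (0 : ℝ) < k := by linarith
  have hsq : Real.sqrt M ≤ Real.sqrt c * (n : ℝ) ^ (1 - β / 2) := by
    rw [Real.sqrt_le_left (by positivity), mul_pow, Real.sq_sqrt hc.le,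
      ← Real.rpow_natCast, ← Real.rpow_mul hn0.le]
    refine hM.trans ?_
    refine mul_le_mul_of_nonneg_left (Real.rpow_le_rpow_of_exponent_le hn1 ?_) hc.le
    have : β ≤ α := min_le_left _ _
    push_cast
    linarith
  have e1 : (n : ℝ) ^ (1 - β / 4) / n = (n : ℝ) ^ (-(β / 4)) := by
    rw [← Real.rpow_sub_one hn0.ne']; congr 1; ring
  have e2 : (n : ℝ) ^ (1 - β / 2) / (n : ℝ) ^ (1 - β / 4) = (n : ℝ) ^ (-(β / 4)) := by
    rw [← Real.rpow_sub hn0]; congr 1; ring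
  have i1 : ((k + 1 : ℕ) : ℝ) / n ≤ (n : ℝ) ^ (-(β / 4)) + 2 * (n : ℝ)⁻¹ := by
    rw [← e1, ← div_eq_mul_inv, ← add_div]
    refine div_le_div_of_nonneg_right ?_ hn0.le
    push_cast; linarith
  have i2 : Real.sqrt M * (2 / k) ≤ 2 * Real.sqrt c * (n : ℝ) ^ (-(β / 4)) := by
    calc _ ≤ (Real.sqrt c * (n : ℝ) ^ (1 - β / 2)) * (2 / (n : ℝ) ^ (1 - β / 4)) := by
          gcongr
      _ = 2 * Real.sqrt c * ((n : ℝ) ^ (1 - β / 2) / (n : ℝ) ^ (1 - β / 4)) := by ring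
      _ = _ := by rw [e2]
  linarith

/-- **Two-state i.i.d. model, perfect anonymity.**  If at least one of the trace lengths
`m n`, `l n` is at most `c * n ^ (2 - α)` for some `c, α > 0`, then
`H(Π(1) | W, Y) → ∞` as `n → ∞`, where `Y` is the anonymized version of `X`
(`Y_{Π(u)} = X_u`, i.e. `Y v = X (Π⁻¹ v)`) and `Π` is a uniformly random permutation
independent of the data. -/
theorem two_state_perfect_anonymity
    (f : ℝ → ℝ) (δ₁ δ₂ : ℝ) (hδ₁ : 0 < δ₁)
    (μP : Measure ℝ) [IsProbabilityMeasure μP]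
    (hμP : μP = volume.withDensity fun x => ENNReal.ofReal (f x))
    (hf0 : ∀ x ∉ Set.Ioo (0 : ℝ) 1, f x = 0)
    (hf : ∀ x ∈ Set.Ioo (0 : ℝ) 1, δ₁ < f x ∧ f x < δ₂)
    (m l : ℕ → ℕ) (c α : ℝ) (hc : 0 < c) (hα : 0 < α)
    (hml : (∀ n : ℕ, (m n : ℝ) ≤ c * (n : ℝ) ^ ((2 : ℝ) - α)) ∨
           (∀ n : ℕ, (l n : ℝ) ≤ c * (n : ℝ) ^ ((2 : ℝ) - α)))
    (Ω : ℕ → Type) (mΩ : ∀ n, MeasurableSpace (Ω n))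
    (μ : ∀ n, Measure (Ω n)) (hμ : ∀ n, IsProbabilityMeasure (μ n))
    (P : ∀ n, Ω n → Fin n → ℝ)
    (X : ∀ n, Ω n → Fin n → Fin (m n) → Bool)
    (W : ∀ n, Ω n → Fin n → Fin (l n) → Bool)
    (prm : ∀ n, Ω n → Equiv.Perm (Fin n))
    (hP : ∀ n, Measurable (P n)) (hX : ∀ n, Measurable (X n))
    (hW : ∀ n, Measurable (W n))
    (hprm : ∀ n (σ : Equiv.Perm (Fin n)), MeasurableSet {ω | prm n ω = σ})
    -- `Π` is uniform on the `n!` permutations, independent of `(P, X, W)`, and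
    -- `(P, X, W)` has the two-state i.i.d. law described above:
    (hjoint : ∀ n (σ : Equiv.Perm (Fin n))
        (s : Set ((Fin n → ℝ) × (Fin n → Fin (m n) → Bool) × (Fin n → Fin (l n) → Bool))),
        MeasurableSet s →
        μ n {ω | prm n ω = σ ∧ (P n ω, X n ω, W n ω) ∈ s} =
          ((n.factorial : ℝ≥0∞))⁻¹ * twoStateLaw n (m n) (l n) μP s) :
    Tendsto (fun n =>
        shCondEntropy (μ n)
          (fun ω => if hn : 0 < n then ((prm n ω ⟨0, hn⟩ : Fin n) : ℕ) else 0)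
          (fun ω => (W n ω, fun v => X n ω ((prm n ω).symm v))))
      atTop atTop := by
  have hP01 : ∀ᵐ x ∂μP, x ∈ Set.Icc (0 : ℝ) 1 := by
    rw [ae_iff]
    have hm : MeasurableSet {x : ℝ | ¬ x ∈ Set.Icc (0 : ℝ) 1} := measurableSet_Icc.compl
    rw [hμP, withDensity_apply _ hm, setLIntegral_congr_fun hm (g := fun _ => 0)]
    · simp
    · intro x hx
      have : f x = 0 := hf0 x fun h => hx (Set.Ioo_subset_Icc_self h)
      simp [this]
  have hβ : 0 < min α 1 := lt_min hα one_pos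
  set S : ℕ → ℝ := fun n => (n : ℝ) ^ (-(min α 1 / 4)) + 2 * (n : ℝ)⁻¹
        + 6 * Real.sqrt c * (n : ℝ) ^ (-(min α 1 / 4)) with hS
  have hSlim : Tendsto S atTop (nhds 0) := by
    have h1 : Tendsto (fun n : ℕ => (n : ℝ) ^ (-(min α 1 / 4))) atTop (nhds 0) :=
      (tendsto_rpow_neg_atTop (by positivity)).comp tendsto_natCast_atTop_atTop
    have h2 : Tendsto (fun n : ℕ => (n : ℝ)⁻¹) atTop (nhds 0) :=
      tendsto_inv_atTop_zero.comp tendsto_natCast_atTop_atTop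
    simpa using (h1.add (h2.const_mul 2)).add (h1.const_mul (6 * Real.sqrt c))
  have hSpos : ∀ n : ℕ, 0 < n → 0 < S n := by
    intro n hn
    have : (0 : ℝ) < n := by exact_mod_cast hn
    simp only [hS]
    positivity
  have hlog : Tendsto (fun n => -Real.log (S n)) atTop atTop := by
    refine tendsto_neg_atBot_atTop.comp (Real.tendsto_log_nhdsGT_zero.comp ?_)
    refine tendsto_nhdsWithin_iff.2 ⟨hSlim, ?_⟩
    filter_upwards [eventually_gt_atTop 0] with n hn using hSpos n hn
  refine tendsto_atTop_mono' atTop ?_ hlog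
  filter_upwards [eventually_gt_atTop 0] with n hn
  haveI := hμ n
  letI := mΩ n
  have hYm : ∀ σ : Equiv.Perm (Fin n), Measurable fun ω => (W n ω, fun v => X n ω (σ.symm v)) := by
    intro σ
    refine (hW n).prodMk (measurable_pi_lambda _ fun v => ?_)
    exact (measurable_pi_apply (σ.symm v)).comp (hX n)
  refine ent_lower (μ n) n _ _ ?_ ?_ (S n) (hSpos n hn) ?_
  · intro ω
    simp only [hn, dif_pos]
    exact (prm n ω ⟨0, hn⟩).isLt
  · intro a b
    have : ((fun ω => if hn : 0 < n then ((prm n ω ⟨0, hn⟩ : Fin n) : ℕ) else 0) ⁻¹' {a} ∩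
        (fun ω => (W n ω, fun v => X n ω ((prm n ω).symm v))) ⁻¹' {b})
        = ⋃ σ ∈ (Finset.univ.filter fun σ : Equiv.Perm (Fin n) => ((σ ⟨0, hn⟩ : Fin n) : ℕ) = a),
          ({ω | prm n ω = σ} ∩ (fun ω => (W n ω, fun v => X n ω (σ.symm v))) ⁻¹' {b}) := by
      ext ω
      simp [hn]
    rw [this]
    refine Finset.measurableSet_biUnion _ fun σ _ => (hprm n σ).inter (hYm σ ?_)
    exact (Set.toFinite _).measurableSet
  · intro g
    have main : ∀ M : ℕ, (M = m n ∨ M = l n) → (M : ℝ) ≤ c * (n : ℝ) ^ ((2 : ℝ) - α) →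
        (μ n {ω | ((prm n ω ⟨0, hn⟩ : Fin n) : ℕ)
          = g (W n ω, fun v => X n ω ((prm n ω).symm v))}).toReal ≤ S n := by
      intro M hM hMc
      obtain ⟨k, hk, hb⟩ := rate_bound c α hc hα n hn M hMc
      exact (guess_le hn μP hP01 (μ n) (P n) (X n) (W n) (prm n) (hP n) (hX n) (hW n) (hprm n)
        (hjoint n) g k hk M hM).trans hb
    simp only [hn, dif_pos]
    rcases hml with h | h
    · exact main (m n) (Or.inl rfl) (h n)
    · exact main (l n) (Or.inr rfl) (h n)
end

section
/- In the r-state i.i.d. model, if at least one of the trace lengths m(n) or l(n) is less than or equal to c·n^{2/(r−1)−α} for some constants c > 0 and α > 0, then user 1 has perfect anonymity: the Shannon conditional entropy H(Π(1) | W, Y) tends to +∞ as n → ∞. -/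
open MeasureTheory ProbabilityTheory Filter
open scoped ENNReal NNReal

/-- Discrete measure on `Fin r` assigning mass `q i` to the point `i`. -/
noncomputable def catMeasure (r : ℕ) (q : Fin r → ℝ) : Measure (Fin r) :=
  ∑ i : Fin r, ENNReal.ofReal (q i) • Measure.dirac i

/-- Extend a parameter vector `(p 1, …, p (r-1))` (probabilities of the values `1, …, r-1`)
to a full probability vector on `{0, 1, …, r-1}`, value `0` receiving the remaining mass. -/
noncomputable def fullProb (r : ℕ) (p : Fin (r - 1) → ℝ) : Fin r → ℝ := fun i =>
  if h : (i : ℕ) = 0 then 1 - ∑ j, p j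
  else p ⟨(i : ℕ) - 1, by have := i.isLt; omega⟩

/-- The open region `{x ∈ (0,1)^d : xᵢ > 0, x₁ + ⋯ + x_d < 1}` of admissible parameters. -/
def simplexRegion (d : ℕ) : Set (Fin d → ℝ) :=
  {x | (∀ i, 0 < x i) ∧ ∑ i, x i < 1}

/-- Joint law of (parameters, actual traces, training traces) in the `r`-state i.i.d. model:
the parameter vectors `p u` are i.i.d. with law `μP`, and conditionally on the parameters the
`n` actual traces (of length `m`) and training traces (of length `l`) consist of i.i.d.
samples from `{0, …, r-1}` where value `i ≥ 1` has probability `p u i` and value `0` the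
remaining probability; all traces are mutually independent. -/
noncomputable def rStateLaw (n m l r : ℕ) (μP : Measure (Fin (r - 1) → ℝ)) :
    Measure ((Fin n → Fin (r - 1) → ℝ) × (Fin n → Fin m → Fin r) × (Fin n → Fin l → Fin r)) :=
  (Measure.pi fun _ : Fin n => μP).bind fun p =>
    (Measure.dirac p).prod
      ((Measure.pi fun u : Fin n =>
          Measure.pi fun _ : Fin m => catMeasure r (fullProb r (p u))).prod
        (Measure.pi fun u : Fin n =>
          Measure.pi fun _ : Fin l => catMeasure r (fullProb r (p u))))

lemma entropy_lb {Ω β : Type*} [MeasurableSpace Ω] [Fintype β] (μ : Measure Ω)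
    [IsProbabilityMeasure μ] (A : Ω → ℕ) (B : Ω → β) (N : ℕ) (hA : ∀ ω, A ω < N)
    (t : ℝ) (ht : 0 < t) (ht1 : t < 1) :
    (-Real.log t) * (1 - (μ {ω | t * (μ (B ⁻¹' {B ω})).toReal <
        (μ (A ⁻¹' {A ω} ∩ B ⁻¹' {B ω})).toReal}).toReal) ≤ shCondEntropy μ A B := by
  classical
  have hlog : 0 ≤ -Real.log t := by
    have := Real.log_neg ht ht1; linarith
  set q : ℕ → β → ℝ := fun a b => (μ (A ⁻¹' {a} ∩ B ⁻¹' {b})).toReal with hq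
  set qb : β → ℝ := fun b => (μ (B ⁻¹' {b})).toReal with hqb
  have hq0 : ∀ a b, 0 ≤ q a b := fun a b => ENNReal.toReal_nonneg
  have hqle : ∀ a b, q a b ≤ qb b := fun a b =>
    ENNReal.toReal_mono (measure_ne_top _ _) (measure_mono Set.inter_subset_right)
  have e1 : shCondEntropy μ A B =
      ∑ a ∈ Finset.range N, ∑ b : β, -(q a b * Real.log (q a b / qb b)) := by
    unfold shCondEntropy
    rw [tsum_eq_sum (s := Finset.range N)]
    · simp only [tsum_fintype, Finset.sum_neg_distrib, hq, hqb]
    · intro a ha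
      have : A ⁻¹' {a} = ∅ := by
        ext ω
        simp only [Set.mem_preimage, Set.mem_singleton_iff, Set.mem_empty_iff_false, iff_false]
        intro h
        apply ha
        rw [← h]
        exact Finset.mem_range.2 (hA ω)
      simp [this]
  have e2 : ∀ a b, (-Real.log t) * (if t * qb b < q a b then 0 else q a b) ≤
      -(q a b * Real.log (q a b / qb b)) := by
    intro a b
    rcases (hq0 a b).eq_or_lt with h0 | h0
    · simp [← h0]
    have hb : 0 < qb b := h0.trans_le (hqle a b)
    split_ifs with h
    · have : Real.log (q a b / qb b) ≤ 0 :=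
        Real.log_nonpos (by positivity) (by rw [div_le_one hb]; exact hqle a b)
      nlinarith
    · have : Real.log (q a b / qb b) ≤ Real.log t := by
        apply Real.log_le_log (by positivity)
        rw [div_le_iff₀ hb]
        exact not_lt.1 h
      nlinarith
  set bad : Set Ω := {ω | t * (μ (B ⁻¹' {B ω})).toReal <
        (μ (A ⁻¹' {A ω} ∩ B ⁻¹' {B ω})).toReal} with hbad
  have e3 : 1 - (μ bad).toReal ≤
      ∑ a ∈ Finset.range N, ∑ b : β, (if t * qb b < q a b then 0 else q a b) := by
    have h1 : (1 : ℝ) ≤ (μ bad).toReal + (μ badᶜ).toReal := by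
      have : μ Set.univ ≤ μ bad + μ badᶜ := by
        rw [← Set.union_compl_self bad]; exact measure_union_le _ _
      rw [← ENNReal.toReal_add (measure_ne_top _ _) (measure_ne_top _ _)]
      rw [measure_univ] at this
      rw [← ENNReal.toReal_one]
      exact ENNReal.toReal_mono (by simp) this
    have h2 : μ badᶜ ≤ ∑ x ∈ (Finset.range N ×ˢ (Finset.univ : Finset β)).filter
        (fun x => ¬ t * qb x.2 < q x.1 x.2), μ (A ⁻¹' {x.1} ∩ B ⁻¹' {x.2}) := by
      refine le_trans (measure_mono ?_) (measure_biUnion_finset_le _ _)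
      intro ω hω
      simp only [Set.mem_iUnion]
      refine ⟨(A ω, B ω), ?_, by simp⟩
      simp only [Finset.mem_filter, Finset.mem_product, Finset.mem_range, Finset.mem_univ, and_true]
      exact ⟨hA ω, hω⟩
    have h3 := ENNReal.toReal_mono (by simp [ENNReal.sum_eq_top, measure_ne_top]) h2
    rw [ENNReal.toReal_sum (fun _ _ => measure_ne_top _ _), Finset.sum_filter,
      Finset.sum_product] at h3
    simp only [ite_not] at h3
    linarith
  rw [e1]
  calc _ ≤ (-Real.log t) *
      ∑ a ∈ Finset.range N, ∑ b : β, (if t * qb b < q a b then 0 else q a b) :=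
        mul_le_mul_of_nonneg_left e3 hlog
    _ = ∑ a ∈ Finset.range N, ∑ b : β,
        (-Real.log t) * (if t * qb b < q a b then 0 else q a b) := by
        simp only [Finset.mul_sum]
    _ ≤ _ := Finset.sum_le_sum fun a _ => Finset.sum_le_sum fun b _ => e2 a b

lemma tv_prod {ι κ : Type*} [Fintype ι] [Fintype κ] [DecidableEq ι] (P Q : ι → κ → ℝ)
    (hP : ∀ i k, 0 < P i k) (hP1 : ∀ i, ∑ k, P i k = 1)
    (hQ1 : ∀ i, ∑ k, Q i k = 1) :
    ∑ x : ι → κ, |∏ i, Q i (x i) - ∏ i, P i (x i)| ≤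
      Real.sqrt (∏ i, ∑ k, Q i k ^ 2 / P i k - 1) := by
  have sP : ∑ x : ι → κ, ∏ i, P i (x i) = 1 := by
    rw [← Fintype.piFinset_univ, ← Finset.prod_univ_sum]; simp [hP1]
  have sQ : ∑ x : ι → κ, ∏ i, Q i (x i) = 1 := by
    rw [← Fintype.piFinset_univ, ← Finset.prod_univ_sum]; simp [hQ1]
  have pos : ∀ x : ι → κ, 0 < ∏ i, P i (x i) := fun x => Finset.prod_pos fun i _ => hP i _
  apply Real.le_sqrt_of_sq_le
  have := Finset.sum_sq_le_sum_mul_sum_of_sq_le_mul (Finset.univ : Finset (ι → κ))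
    (r := fun x => |∏ i, Q i (x i) - ∏ i, P i (x i)|)
    (f := fun x => (∏ i, Q i (x i) - ∏ i, P i (x i)) ^ 2 / ∏ i, P i (x i))
    (g := fun x => ∏ i, P i (x i))
    (fun x _ => div_nonneg (sq_nonneg _) (pos x).le) (fun x _ => (pos x).le)
    (fun x _ => by
      simp only [sq_abs]
      rw [div_mul_cancel₀ _ (pos x).ne'])
  refine this.trans (le_of_eq ?_)
  rw [sP, mul_one]
  have h : ∀ x : ι → κ, (∏ i, Q i (x i) - ∏ i, P i (x i)) ^ 2 / ∏ i, P i (x i) =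
      ∏ i, (Q i (x i) ^ 2 / P i (x i)) - 2 * ∏ i, Q i (x i) + ∏ i, P i (x i) := by
    intro x
    have := (pos x).ne'
    rw [Finset.prod_div_distrib, Finset.prod_pow]
    field_simp
    ring
  rw [Finset.sum_congr rfl fun x _ => h x, Finset.sum_add_distrib, Finset.sum_sub_distrib,
    ← Finset.mul_sum, sP, sQ, Finset.prod_univ_sum, Fintype.piFinset_univ]
  ring

/-- likelihood of a collection of traces -/
noncomputable def lik {r n : ℕ} (k : ℕ) (p : Fin n → Fin (r - 1) → ℝ)
    (x : Fin n → Fin k → Fin r) : ℝ≥0∞ :=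
  ∏ u, ∏ j, ENNReal.ofReal (fullProb r (p u) (x u j))

instance catMeasure_finite (r : ℕ) (q : Fin r → ℝ) : IsFiniteMeasure (catMeasure r q) := by
  refine ⟨?_⟩
  unfold catMeasure
  simp [ENNReal.sum_lt_top]

lemma catMeasure_singleton (r : ℕ) (q : Fin r → ℝ) (i : Fin r) :
    catMeasure r q {i} = ENNReal.ofReal (q i) := by
  classical
  unfold catMeasure
  simp [Measure.finsetSum_apply, Set.indicator_apply]

lemma pi_pi_singleton {r n : ℕ} (k : ℕ) (p : Fin n → Fin (r - 1) → ℝ)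
    (x : Fin n → Fin k → Fin r) :
    (Measure.pi fun u : Fin n =>
          Measure.pi fun _ : Fin k => catMeasure r (fullProb r (p u))) {x} = lik k p x := by
  rw [Measure.pi_singleton]
  unfold lik
  refine Finset.prod_congr rfl fun u _ => ?_
  rw [Measure.pi_singleton]
  simp [catMeasure_singleton]

lemma law_le (n m l r : ℕ) (μP : Measure (Fin (r - 1) → ℝ))
    (x : Fin n → Fin m → Fin r) (w : Fin n → Fin l → Fin r) :
    rStateLaw n m l r μP (Set.univ ×ˢ ({x} ×ˢ {w})) ≤
      ∫⁻ p, lik m p x * lik l p w ∂(Measure.pi fun _ : Fin n => μP) := by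
  unfold rStateLaw
  refine (Measure.bind_apply_le _ ?_).trans (le_of_eq ?_)
  · exact MeasurableSet.univ.prod ((measurableSet_singleton _).prod (measurableSet_singleton _))
  refine lintegral_congr fun p => ?_
  rw [Measure.prod_prod, Measure.prod_prod, pi_pi_singleton, pi_pi_singleton]
  simp

lemma lintegral_perm {E : Type*} [MeasurableSpace E] {n : ℕ} (μP : Measure E)
    [IsProbabilityMeasure μP] (σ : Equiv.Perm (Fin n)) (g : (Fin n → E) → ℝ≥0∞) :
    ∫⁻ p, g (p ∘ σ) ∂(Measure.pi fun _ : Fin n => μP) =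
      ∫⁻ p, g p ∂(Measure.pi fun _ : Fin n => μP) := by
  have h := measurePreserving_arrowCongr' (fun _ : Fin n => μP) (fun _ : Fin n => μP) σ.symm
    (MeasurableEquiv.refl E) (fun _ => MeasurePreserving.id _)
  exact h.lintegral_comp_emb (MeasurableEquiv.measurableEmbedding _) g

/-- number of users in the same cell as `v` -/
noncomputable def cellCount {E C : Type*} {n : ℕ} (T : Set E) (cell : E → C)
    (p : Fin n → E) (v : Fin n) : ℕ := by
  classical
  exact (Finset.univ.filter fun u => p u ∈ T ∧ cell (p u) = cell (p v)).card

open Classical in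
lemma cellCount_pigeon {E C : Type*} [Fintype C] {n : ℕ} (T : Set E) (cell : E → C)
    (p : Fin n → E) (K : ℕ) :
    (Finset.univ.filter fun u => p u ∈ T ∧ cellCount T cell p u < K).card
      ≤ K * Fintype.card C := by
  rw [← Finset.card_univ]
  refine Finset.card_le_mul_card_image_of_maps_to (f := fun u => cell (p u))
    (fun _ _ => Finset.mem_univ _) K ?_
  intro c _
  rcases Finset.eq_empty_or_nonempty
    ((Finset.univ.filter fun u => p u ∈ T ∧ cellCount T cell p u < K).filter
      fun u => cell (p u) = c) with h | ⟨u, hu⟩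
  · rw [h]; simp
  · simp only [Finset.mem_filter, Finset.mem_univ, true_and] at hu
    refine le_trans (Finset.card_le_card ?_) hu.1.2.le
    intro v hv
    simp only [Finset.mem_filter, Finset.mem_univ, true_and] at hv ⊢
    exact ⟨hv.1.1, by rw [hv.2, hu.2]⟩

lemma cellCount_swap {E C : Type*} {n : ℕ} (T : Set E) (cell : E → C)
    (p : Fin n → E) (σ : Equiv.Perm (Fin n)) (v : Fin n) :
    cellCount T cell (p ∘ σ) v = cellCount T cell p (σ v) := by
  classical
  unfold cellCount
  refine Finset.card_bij (fun u _ => σ u) ?_ ?_ ?_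
  · intro a ha; simpa using ha
  · intro a _ b _ h; exact σ.injective h
  · intro b hb
    exact ⟨σ.symm b, by simpa using hb, by simp⟩

lemma cellCount_measurable {E C : Type*} [MeasurableSpace E] [Fintype C] [MeasurableSpace C]
    [MeasurableSingletonClass C] {n : ℕ} (T : Set E) (hT : MeasurableSet T) (cell : E → C)
    (hcell : Measurable cell) (v : Fin n) :
    Measurable (fun p : Fin n → E => cellCount T cell p v) := by
  classical
  unfold cellCount
  simp only [Finset.card_filter]
  refine Finset.measurable_sum _ fun u _ => ?_
  refine Measurable.ite ?_ measurable_const measurable_const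
  exact (hT.preimage (measurable_pi_apply u)).inter
    (measurableSet_eq_fun (hcell.comp (measurable_pi_apply u)) (hcell.comp (measurable_pi_apply v)))

lemma low_count_le {E C : Type*} [MeasurableSpace E] [Fintype C] [MeasurableSpace C]
    [MeasurableSingletonClass C] {n : ℕ} (μP : Measure E) [IsProbabilityMeasure μP]
    (T : Set E) (hT : MeasurableSet T) (cell : E → C)
    (hcell : Measurable cell) (i0 : Fin n) (K : ℕ) :
    (Measure.pi fun _ : Fin n => μP) {p | p i0 ∈ T ∧ cellCount T cell p i0 < K} ≤
      (K * Fintype.card C : ℕ) / (n : ℝ≥0∞) := by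
  classical
  set S : Fin n → Set (Fin n → E) := fun u => {p | p u ∈ T ∧ cellCount T cell p u < K} with hS
  have hSm : ∀ u, MeasurableSet (S u) := fun u =>
    (hT.preimage (measurable_pi_apply u)).inter
      (measurableSet_lt (cellCount_measurable T hT cell hcell u) measurable_const)
  have h1 : ∀ u, (Measure.pi fun _ : Fin n => μP) (S u) =
      (Measure.pi fun _ : Fin n => μP) (S i0) := by
    intro u
    rw [← lintegral_indicator_one (hSm u), ← lintegral_indicator_one (hSm i0),
      ← lintegral_perm μP (Equiv.swap i0 u)]
    refine lintegral_congr fun p => ?_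
    simp [Set.indicator_apply, hS, cellCount_swap]
  have h2 : (n : ℝ≥0∞) * (Measure.pi fun _ : Fin n => μP) (S i0) ≤
      (K * Fintype.card C : ℕ) := by
    calc _ = ∑ u, (Measure.pi fun _ : Fin n => μP) (S u) := by simp [h1]
      _ = ∫⁻ p, ∑ u, (S u).indicator 1 p ∂(Measure.pi fun _ : Fin n => μP) := by
        rw [lintegral_finsetSum]
        · exact Finset.sum_congr rfl fun u _ => (lintegral_indicator_one (hSm u)).symm
        · intro u _
          exact measurable_one.indicator (hSm u)
      _ ≤ ∫⁻ p, (K * Fintype.card C : ℕ) ∂(Measure.pi fun _ : Fin n => μP) := by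
        refine lintegral_mono fun p => ?_
        have := cellCount_pigeon T cell p K
        rw [Finset.card_filter] at this
        simp only [Set.indicator_apply, hS, Set.mem_ofPred_eq, Pi.one_apply]
        exact_mod_cast this
      _ = _ := by simp
  rw [ENNReal.le_div_iff_mul_le, mul_comm]
  · exact h2
  · left; have := i0.pos; simp; omega
  · left; simp

lemma abstract_bound {E C : Type*} [MeasurableSpace E] [Fintype C] [MeasurableSpace C]
    [MeasurableSingletonClass C] {n : ℕ} (μP : Measure E) [IsProbabilityMeasure μP]
    (T : Set E) (hT : MeasurableSet T) (cell : E → C)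
    (hcell : Measurable cell) (i0 : Fin n) (K : ℕ) (hK : 0 < K)
    (G : Fin n → (Fin n → E) → ℝ≥0∞) (hGm : ∀ u, Measurable (G u)) (s ε : ℝ≥0∞)
    (hG1 : ∀ᵐ p ∂(Measure.pi fun _ : Fin n => μP), G i0 p ≤ 1)
    (hGs : ∀ᵐ p ∂(Measure.pi fun _ : Fin n => μP), ∑ u, G u p ≤ s)
    (hsw : ∀ (u : Fin n) (h : (Fin n → E) → ℝ≥0∞), Measurable h →
      (∀ p, h (p ∘ Equiv.swap i0 u) = h p) →
      (∀ p, h p ≠ 0 → p i0 ∈ T ∧ p u ∈ T ∧ cell (p i0) = cell (p u)) →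
      ∫⁻ p, h p * G i0 p ∂(Measure.pi fun _ : Fin n => μP) ≤
        ∫⁻ p, h p * G u p ∂(Measure.pi fun _ : Fin n => μP) +
        ε * ∫⁻ p, h p ∂(Measure.pi fun _ : Fin n => μP)) :
    ∫⁻ p, G i0 p ∂(Measure.pi fun _ : Fin n => μP) ≤
      μP Tᶜ + (K * Fintype.card C : ℕ) / (n : ℝ≥0∞) + (s / K + ε) := by
  classical
  set ν := (Measure.pi fun _ : Fin n => μP) with hν
  set N : (Fin n → E) → ℕ := fun p => cellCount T cell p i0 with hN
  have hNm : Measurable N := cellCount_measurable T hT cell hcell i0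
  set Q : Fin n → (Fin n → E) → Prop := fun u p =>
    (p u ∈ T ∧ cell (p u) = cell (p i0)) ∧ p i0 ∈ T ∧ K ≤ N p with hQ
  have hQm : ∀ u, MeasurableSet {p | Q u p} := fun u =>
    ((hT.preimage (measurable_pi_apply u)).inter
    (measurableSet_eq_fun (hcell.comp (measurable_pi_apply u))
      (hcell.comp (measurable_pi_apply i0)))).inter
    ((hT.preimage (measurable_pi_apply i0)).inter (measurableSet_le measurable_const hNm))
  set h : Fin n → (Fin n → E) → ℝ≥0∞ := fun u p => if Q u p then (N p : ℝ≥0∞)⁻¹ else 0 with hh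
  have hhm : ∀ u, Measurable (h u) := fun u =>
    Measurable.ite (hQm u)
      ((measurable_from_top (f := fun k : ℕ => (k : ℝ≥0∞)⁻¹)).comp hNm) measurable_const
  have hQsw : ∀ u p, Q u p → Q u (p ∘ Equiv.swap i0 u) := by
    rintro u p ⟨⟨h1, h2⟩, h3, h4⟩
    refine ⟨⟨by simpa using h3, by simp [h2]⟩, by simpa using h1, ?_⟩
    simp only [hN, cellCount_swap, Equiv.swap_apply_left] at h4 ⊢
    simpa only [cellCount, h2] using h4
  have hsum : ∀ p, ∑ u, h u p = if p i0 ∈ T ∧ K ≤ N p then 1 else 0 := by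
    intro p
    split_ifs with hp
    · simp only [hh, hQ, hp, and_true]
      rw [← Finset.sum_filter, Finset.sum_const, nsmul_eq_mul]
      have : (Finset.univ.filter fun u => p u ∈ T ∧ cell (p u) = cell (p i0)).card = N p := rfl
      rw [this]
      apply ENNReal.mul_inv_cancel
      · have := hp.2
        simp; omega
      · simp
    · simp [hh, hQ, hp]
  have hsum1 : ∀ p, ∑ u, h u p ≤ 1 := by
    intro p; rw [hsum]; split_ifs <;> simp
  have hle : ∀ u p, h u p ≤ (K : ℝ≥0∞)⁻¹ := by
    intro u p
    simp only [hh]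
    split_ifs with hq
    · exact ENNReal.inv_le_inv.2 (by exact_mod_cast hq.2.2)
    · simp
  have key : ∀ u, ∫⁻ p, h u p * G i0 p ∂ν ≤ ∫⁻ p, h u p * G u p ∂ν + ε * ∫⁻ p, h u p ∂ν := by
    intro u
    refine hsw u (h u) (hhm u) ?_ ?_
    · intro p
      simp only [hh]
      by_cases hq : Q u p
      · rw [if_pos hq, if_pos (hQsw u p hq)]
        congr 2
        simp only [hN, cellCount_swap, Equiv.swap_apply_left]
        simp only [cellCount, hq.1.2]
      · rw [if_neg hq, if_neg]
        intro hq'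
        apply hq
        have := hQsw u _ hq'
        have e : (p ∘ Equiv.swap i0 u) ∘ Equiv.swap i0 u = p := by
          ext; simp
        rwa [e] at this
    · intro p hp
      have : Q u p := by
        by_contra hq
        exact hp (by simp [hh, hq])
      exact ⟨this.2.1, this.1.1, this.1.2.symm⟩
  have hTm : MeasurableSet {p : Fin n → E | p i0 ∉ T} :=
    hT.compl.preimage (measurable_pi_apply i0)
  have hLm : MeasurableSet {p : Fin n → E | p i0 ∈ T ∧ N p < K} :=
    (hT.preimage (measurable_pi_apply i0)).inter (measurableSet_lt hNm measurable_const)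
  calc ∫⁻ p, G i0 p ∂ν
      ≤ ∫⁻ p, ({p : Fin n → E | p i0 ∉ T}.indicator 1 p +
          {p : Fin n → E | p i0 ∈ T ∧ N p < K}.indicator 1 p) + ∑ u, h u p * G i0 p ∂ν := by
        refine lintegral_mono_ae ?_
        filter_upwards [hG1] with p hp
        rw [← Finset.sum_mul, hsum]
        by_cases h1 : p i0 ∈ T
        · by_cases h2 : K ≤ N p
          · simp [h1, h2]
          · simp [h1, h2, hp, not_le.1 h2]
        · simp [h1, hp]
    _ = ν {p : Fin n → E | p i0 ∉ T} + ν {p : Fin n → E | p i0 ∈ T ∧ N p < K} +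
          ∑ u, ∫⁻ p, h u p * G i0 p ∂ν := by
        rw [lintegral_add_left, lintegral_add_left, lintegral_indicator_one hTm,
          lintegral_indicator_one hLm, lintegral_finsetSum]
        · exact fun u _ => (hhm u).mul (hGm i0)
        · exact measurable_one.indicator hTm
        · exact (measurable_one.indicator hTm).add (measurable_one.indicator hLm)
    _ ≤ μP Tᶜ + (K * Fintype.card C : ℕ) / (n : ℝ≥0∞) + (s / K + ε) := by
        refine add_le_add (add_le_add (le_of_eq ?_) ?_) ?_
        · have := (measurePreserving_eval (fun _ : Fin n => μP) i0).measure_preimage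
            hT.compl.nullMeasurableSet
          exact this
        · exact low_count_le μP T hT cell hcell i0 K
        · calc _ ≤ ∑ u, (∫⁻ p, h u p * G u p ∂ν + ε * ∫⁻ p, h u p ∂ν) :=
                Finset.sum_le_sum fun u _ => key u
            _ = ∫⁻ p, ∑ u, h u p * G u p ∂ν + ε * ∫⁻ p, ∑ u, h u p ∂ν := by
                rw [Finset.sum_add_distrib, ← Finset.mul_sum, lintegral_finsetSum,
                  lintegral_finsetSum]
                · exact fun u _ => hhm u
                · exact fun u _ => (hhm u).mul (hGm u)
            _ ≤ ∫⁻ p, s / K ∂ν + ε * ∫⁻ p, 1 ∂ν := by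
                gcongr ?_ + ε * ?_
                · refine lintegral_mono_ae ?_
                  filter_upwards [hGs] with p hp
                  calc _ ≤ ∑ u, (K : ℝ≥0∞)⁻¹ * G u p :=
                        Finset.sum_le_sum fun u _ => mul_le_mul_left (hle u p) _
                    _ = (∑ u, G u p) / K := by
                        rw [← Finset.mul_sum, mul_comm, div_eq_mul_inv]
                    _ ≤ _ := ENNReal.div_le_div_right hp _
                · exact lintegral_mono hsum1
            _ = _ := by simp

lemma fullProb_sum {r : ℕ} (hr : 2 ≤ r) (p : Fin (r - 1) → ℝ) : ∑ i, fullProb r p i = 1 := by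
  obtain ⟨d, rfl⟩ : ∃ d, r = d + 1 := ⟨r - 1, by omega⟩
  rw [Fin.sum_univ_succ]
  simp [fullProb]

lemma fullProb_pos {r : ℕ} (p : Fin (r - 1) → ℝ) (hp : p ∈ simplexRegion (r - 1)) (i : Fin r) :
    0 < fullProb r p i := by
  unfold fullProb
  split_ifs
  · have := hp.2; linarith
  · exact hp.1 _

lemma fullProb_measurable (r : ℕ) (i : Fin r) : Measurable fun p => fullProb r p i := by
  unfold fullProb
  split_ifs
  · fun_prop
  · fun_prop

lemma lik_measurable {r n k : ℕ} (x : Fin n → Fin k → Fin r) :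
    Measurable fun p : Fin n → Fin (r - 1) → ℝ => lik k p x := by
  unfold lik
  refine Finset.measurable_prod _ fun u _ => Finset.measurable_prod _ fun j _ => ?_
  exact ((fullProb_measurable r _).comp (measurable_pi_apply u)).ennreal_ofReal

lemma sum_prod_fun {κ : Type*} [Fintype κ] (k : ℕ) (g : κ → ℝ) :
    ∑ x : Fin k → κ, ∏ j, g (x j) = (∑ i, g i) ^ k := by
  rw [← Fintype.piFinset_univ, ← Finset.prod_univ_sum]; simp

lemma lik_eq {r n k : ℕ} (p : Fin n → Fin (r - 1) → ℝ) (hp : ∀ u, p u ∈ simplexRegion (r - 1))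
    (x : Fin n → Fin k → Fin r) :
    lik k p x = ENNReal.ofReal (∏ u, ∏ j, fullProb r (p u) (x u j)) := by
  unfold lik
  rw [ENNReal.ofReal_prod_of_nonneg]
  · refine Finset.prod_congr rfl fun u _ => ?_
    rw [ENNReal.ofReal_prod_of_nonneg]
    exact fun j _ => (fullProb_pos _ (hp u) _).le
  · exact fun u _ => Finset.prod_nonneg fun j _ => (fullProb_pos _ (hp u) _).le

lemma lik_sum {r n k : ℕ} (hr : 2 ≤ r) (p : Fin n → Fin (r - 1) → ℝ)
    (hp : ∀ u, p u ∈ simplexRegion (r - 1)) :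
    ∑ x : Fin n → Fin k → Fin r, lik k p x = 1 := by
  classical
  simp only [lik_eq p hp]
  rw [← ENNReal.ofReal_sum_of_nonneg]
  · rw [← Fintype.piFinset_univ,
      ← Finset.prod_univ_sum (fun _ => Finset.univ)
        (fun (u : Fin n) (z : Fin k → Fin r) => ∏ j, fullProb r (p u) (z j))]
    simp [sum_prod_fun, fullProb_sum hr]
  · exact fun x _ => Finset.prod_nonneg fun u _ =>
      Finset.prod_nonneg fun j _ => (fullProb_pos _ (hp u) _).le

lemma lik_comp {r n k : ℕ} (p : Fin n → Fin (r - 1) → ℝ) (x : Fin n → Fin k → Fin r)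
    (a b : Fin n) : lik k p (x ∘ Equiv.swap a b) = lik k (p ∘ Equiv.swap a b) x := by
  unfold lik
  rw [← Equiv.prod_comp (Equiv.swap a b)]
  simp

lemma chi_bound {r : ℕ} (P Q : Fin r → ℝ) (η Δ : ℝ) (hη : 0 < η) (hP : ∀ i, η ≤ P i)
    (hP1 : ∑ i, P i = 1) (hQ1 : ∑ i, Q i = 1) (hΔ : ∀ i, |Q i - P i| ≤ Δ) :
    ∑ i, Q i ^ 2 / P i ≤ 1 + r * (Δ ^ 2 / η) := by
  have h : ∀ i, Q i ^ 2 / P i ≤ 2 * Q i - P i + Δ ^ 2 / η := by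
    intro i
    have hp : 0 < P i := hη.trans_le (hP i)
    have : Q i ^ 2 / P i = 2 * Q i - P i + (Q i - P i) ^ 2 / P i := by
      field_simp; ring
    rw [this]
    have h2 : (Q i - P i) ^ 2 ≤ Δ ^ 2 := sq_le_sq' (abs_le.1 (hΔ i)).1 (abs_le.1 (hΔ i)).2
    have h3 : (Q i - P i) ^ 2 / P i ≤ Δ ^ 2 / η :=
      div_le_div₀ (sq_nonneg _) h2 hη (hP i)
    linarith
  calc _ ≤ ∑ i, (2 * Q i - P i + Δ ^ 2 / η) := Finset.sum_le_sum fun i _ => h i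
    _ = _ := by
      rw [Finset.sum_add_distrib, Finset.sum_sub_distrib, ← Finset.mul_sum, hP1, hQ1]
      simp
      norm_num

lemma lik_tv {r n k : ℕ} (hr : 2 ≤ r) (p : Fin n → Fin (r - 1) → ℝ)
    (hp : ∀ u, p u ∈ simplexRegion (r - 1)) (a b : Fin n) (η Δ : ℝ) (hη : 0 < η)
    (ha : ∀ i, η ≤ fullProb r (p a) i) (hb : ∀ i, η ≤ fullProb r (p b) i)
    (hΔ : ∀ i, |fullProb r (p a) i - fullProb r (p b) i| ≤ Δ) :
    ∑ x : Fin n → Fin k → Fin r, (lik k (p ∘ Equiv.swap a b) x - lik k p x) ≤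
      ENNReal.ofReal (Real.sqrt (Real.exp (2 * (k * (r * (Δ ^ 2 / η)))) - 1)) := by
  classical
  have hp' : ∀ u, (p ∘ Equiv.swap a b) u ∈ simplexRegion (r - 1) := fun u => hp _
  have key := tv_prod (fun (u : Fin n) (z : Fin k → Fin r) => ∏ j, fullProb r (p u) (z j))
    (fun (u : Fin n) (z : Fin k → Fin r) => ∏ j, fullProb r (p (Equiv.swap a b u)) (z j))
    (fun u z => Finset.prod_pos fun j _ => fullProb_pos _ (hp u) _)
    (fun u => by simp [sum_prod_fun, fullProb_sum hr])
    (fun u => by simp [sum_prod_fun, fullProb_sum hr])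
  set c := Real.exp (k * (r * (Δ ^ 2 / η))) with hc
  have hc1 : 1 ≤ c := Real.one_le_exp (by positivity)
  have hfac : ∀ u u' : Fin n, (∀ i, η ≤ fullProb r (p u) i) →
      (∀ i, |fullProb r (p u') i - fullProb r (p u) i| ≤ Δ) →
      ∑ z : Fin k → Fin r, (∏ j, fullProb r (p u') (z j)) ^ 2 / ∏ j, fullProb r (p u) (z j)
        ≤ c := by
    intro u u' h1 h2
    have : ∀ z : Fin k → Fin r,
        (∏ j, fullProb r (p u') (z j)) ^ 2 / ∏ j, fullProb r (p u) (z j) =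
        ∏ j, (fullProb r (p u') (z j) ^ 2 / fullProb r (p u) (z j)) := by
      intro z
      rw [Finset.prod_div_distrib, Finset.prod_pow]
    simp only [this]
    rw [sum_prod_fun k fun i => fullProb r (p u') i ^ 2 / fullProb r (p u) i]
    have h3 := chi_bound _ (fullProb r (p u')) η Δ hη h1 (fullProb_sum hr _) (fullProb_sum hr _) h2
    have h4 : (1 : ℝ) + r * (Δ ^ 2 / η) ≤ Real.exp (r * (Δ ^ 2 / η)) := by
      have := Real.add_one_le_exp (r * (Δ ^ 2 / η)); linarith
    rw [hc, Real.exp_nat_mul]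
    refine pow_le_pow_left₀ ?_ (h3.trans h4) k
    exact Finset.sum_nonneg fun i _ => div_nonneg (sq_nonneg _) (fullProb_pos _ (hp u) _).le
  have hprod : ∏ u, ∑ z : Fin k → Fin r, (∏ j, fullProb r (p (Equiv.swap a b u)) (z j)) ^ 2 /
      ∏ j, fullProb r (p u) (z j) ≤ c * c := by
    calc _ ≤ ∏ u, ((if u = a then c else 1) * (if u = b then c else 1)) := by
          refine Finset.prod_le_prod ?_ ?_
          · intro u _
            exact Finset.sum_nonneg fun z _ => div_nonneg (sq_nonneg _)
              (Finset.prod_nonneg fun j _ => (fullProb_pos _ (hp u) _).le)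
          · intro u _
            by_cases hua : u = a
            · subst hua
              have := hfac u b ha (fun i => by rw [abs_sub_comm]; exact hΔ i)
              rw [Equiv.swap_apply_left]
              simp only [if_true]
              split_ifs <;> nlinarith
            by_cases hub : u = b
            · subst hub
              have := hfac u a hb hΔ
              rw [Equiv.swap_apply_right]
              simp only [if_true, if_neg hua]
              linarith
            · rw [Equiv.swap_apply_of_ne_of_ne hua hub]
              simp only [if_neg hua, if_neg hub, mul_one]
              have : ∀ z : Fin k → Fin r,
                  (∏ j, fullProb r (p u) (z j)) ^ 2 / ∏ j, fullProb r (p u) (z j) =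
                  ∏ j, fullProb r (p u) (z j) := by
                intro z
                have h0 : 0 < ∏ j, fullProb r (p u) (z j) :=
                  Finset.prod_pos fun j _ => fullProb_pos _ (hp u) _
                field_simp
              simp only [this]
              simp [sum_prod_fun, fullProb_sum hr]
      _ = c * c := by
          rw [Finset.prod_mul_distrib]
          simp
  calc _ ≤ ∑ x : Fin n → Fin k → Fin r,
      ENNReal.ofReal |∏ u, ∏ j, fullProb r (p (Equiv.swap a b u)) (x u j) -
        ∏ u, ∏ j, fullProb r (p u) (x u j)| := by
        refine Finset.sum_le_sum fun x _ => ?_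
        rw [lik_eq _ hp, lik_eq _ hp', ← ENNReal.ofReal_sub]
        · exact ENNReal.ofReal_le_ofReal (le_abs_self _)
        · exact Finset.prod_nonneg fun u _ => Finset.prod_nonneg fun j _ =>
            (fullProb_pos _ (hp u) _).le
    _ = ENNReal.ofReal (∑ x : Fin n → Fin k → Fin r,
      |∏ u, ∏ j, fullProb r (p (Equiv.swap a b u)) (x u j) -
        ∏ u, ∏ j, fullProb r (p u) (x u j)|) := by
        rw [ENNReal.ofReal_sum_of_nonneg fun _ _ => abs_nonneg _]
    _ ≤ _ := by
        refine ENNReal.ofReal_le_ofReal (key.trans (Real.sqrt_le_sqrt ?_))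
        rw [two_mul, Real.exp_add]
        linarith

/-- average over permutations and traces with weights `A` (anonymized) and `B` (training) -/
noncomputable def hfun {n : ℕ} {Y W : Type} [Fintype Y] [Fintype W]
    (D : Fin n → W × (Fin n → Y) → ℝ≥0∞) (A : (Fin n → Y) → ℝ≥0∞) (B : W → ℝ≥0∞)
    (u : Fin n) : ℝ≥0∞ :=
  ((n.factorial : ℝ≥0∞))⁻¹ * ∑ σ : Equiv.Perm (Fin n), ∑ y : Fin n → Y, ∑ w : W,
    A (y ∘ σ) * B w * D (σ u) (w, y)

section hfun
variable {n : ℕ} {Y W : Type} [Fintype Y] [Fintype W]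
    (D : Fin n → W × (Fin n → Y) → ℝ≥0∞) (A A' : (Fin n → Y) → ℝ≥0∞) (B B' : W → ℝ≥0∞)
    (u : Fin n)

lemma fact_avg (z : ℝ≥0∞) : ((n.factorial : ℝ≥0∞))⁻¹ * ∑ _σ : Equiv.Perm (Fin n), z = z := by
  rw [Finset.sum_const, Finset.card_univ, Fintype.card_perm, Fintype.card_fin, nsmul_eq_mul,
    ← mul_assoc, ENNReal.inv_mul_cancel, one_mul]
  · exact_mod_cast n.factorial_ne_zero
  · simp

lemma hfun_le (hD : ∀ v b, D v b ≤ 1) : hfun D A B u ≤ (∑ y, A y) * ∑ w, B w := by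
  unfold hfun
  rw [← fact_avg (n := n) ((∑ y, A y) * ∑ w, B w)]
  gcongr with σ _
  have : ∑ y : Fin n → Y, A y = ∑ y : Fin n → Y, A (y ∘ σ) :=
    (Equiv.sum_comp (Equiv.arrowCongr σ.symm (Equiv.refl Y)) A).symm
  rw [this, Finset.sum_mul_sum]
  refine Finset.sum_le_sum fun y _ => Finset.sum_le_sum fun w _ => ?_
  exact mul_le_of_le_one_right' (hD _ _)

lemma hfun_sum_le (s : ℝ≥0∞) (hD : ∀ b, ∑ v, D v b ≤ s) :
    ∑ u, hfun D A B u ≤ ((∑ y, A y) * ∑ w, B w) * s := by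
  unfold hfun
  rw [← fact_avg (n := n) (((∑ y, A y) * ∑ w, B w) * s), ← Finset.mul_sum, Finset.sum_comm]
  gcongr with σ _
  have : ∑ y : Fin n → Y, A y = ∑ y : Fin n → Y, A (y ∘ σ) :=
    (Equiv.sum_comp (Equiv.arrowCongr σ.symm (Equiv.refl Y)) A).symm
  rw [this, Finset.sum_mul_sum, Finset.sum_comm, Finset.sum_mul]
  gcongr with y _
  rw [Finset.sum_comm, Finset.sum_mul]
  gcongr with w _
  rw [← Finset.mul_sum, Equiv.sum_comp σ (fun v => D v (w, y))]
  gcongr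
  exact hD _

lemma hfun_change_left (hD : ∀ v b, D v b ≤ 1) :
    hfun D A B u ≤ hfun D A' B u + (∑ y, (A y - A' y)) * ∑ w, B w := by
  have h1 : hfun D A B u ≤ hfun D (fun y => A' y + (A y - A' y)) B u := by
    unfold hfun
    gcongr with σ _ y _ w _
    exact le_add_tsub
  have h2 : hfun D (fun y => A' y + (A y - A' y)) B u =
      hfun D A' B u + hfun D (fun y => A y - A' y) B u := by
    unfold hfun
    simp only [add_mul, Finset.sum_add_distrib, mul_add]
  rw [h2] at h1
  exact h1.trans (by gcongr; exact hfun_le _ _ _ _ hD)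

lemma hfun_change_right (hD : ∀ v b, D v b ≤ 1) :
    hfun D A B u ≤ hfun D A B' u + (∑ y, A y) * ∑ w, (B w - B' w) := by
  have h1 : hfun D A B u ≤ hfun D A (fun y => B' y + (B y - B' y)) u := by
    unfold hfun
    gcongr with σ _ y _ w _
    exact le_add_tsub
  have h2 : hfun D A (fun y => B' y + (B y - B' y)) u =
      hfun D A B' u + hfun D A (fun y => B y - B' y) u := by
    unfold hfun
    simp only [add_mul, Finset.sum_add_distrib, mul_add]
  rw [h2] at h1
  exact h1.trans (by gcongr; exact hfun_le _ _ _ _ hD)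

lemma hfun_swap (a : Fin n) :
    hfun D A B a = hfun D (fun y => A (y ∘ Equiv.swap a u)) B u := by
  unfold hfun
  rw [← Equiv.sum_comp (Equiv.mulRight (Equiv.swap a u))]
  simp only [Equiv.coe_mulRight, Equiv.Perm.coe_mul, Function.comp_apply, Equiv.swap_apply_left,
    Function.comp_assoc]

end hfun

lemma prob_le {r n m l : ℕ} (μP : Measure (Fin (r - 1) → ℝ)) (i0 : Fin n)
    {Ω : Type} [MeasurableSpace Ω] (μ : Measure Ω)
    (P : Ω → Fin n → Fin (r - 1) → ℝ)
    (X : Ω → Fin n → Fin m → Fin r) (W : Ω → Fin n → Fin l → Fin r)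
    (prm : Ω → Equiv.Perm (Fin n))
    (hjoint : ∀ (σ : Equiv.Perm (Fin n))
        (s : Set ((Fin n → Fin (r - 1) → ℝ) ×
          (Fin n → Fin m → Fin r) × (Fin n → Fin l → Fin r))),
        MeasurableSet s →
        μ {ω | prm ω = σ ∧ (P ω, X ω, W ω) ∈ s} =
          ((n.factorial : ℝ≥0∞))⁻¹ * rStateLaw n m l r μP s)
    (S : Fin n → (Fin n → Fin l → Fin r) × (Fin n → Fin m → Fin r) → Prop)
    (D : Fin n → (Fin n → Fin l → Fin r) × (Fin n → Fin m → Fin r) → ℝ≥0∞)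
    (hSD : ∀ v b, S v b → 1 ≤ D v b) :
    μ {ω | S (prm ω i0) (W ω, fun v => X ω ((prm ω).symm v))} ≤
      ∫⁻ p, hfun D (lik m p) (lik l p) i0 ∂(Measure.pi fun _ : Fin n => μP) := by
  classical
  set V : Equiv.Perm (Fin n) → (Fin n → Fin m → Fin r) → (Fin n → Fin l → Fin r) → Set Ω :=
    fun σ y w => {ω | prm ω = σ ∧ (P ω, X ω, W ω) ∈
      (Set.univ ×ˢ ({y ∘ σ} ×ˢ {w}) : Set ((Fin n → Fin (r - 1) → ℝ) ×
          (Fin n → Fin m → Fin r) × (Fin n → Fin l → Fin r)))} with hV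
  have h1 : μ {ω | S (prm ω i0) (W ω, fun v => X ω ((prm ω).symm v))} ≤
      ∑ z ∈ (Finset.univ : Finset (Equiv.Perm (Fin n) × (Fin n → Fin m → Fin r) ×
        (Fin n → Fin l → Fin r))).filter (fun z => S (z.1 i0) (z.2.2, z.2.1)),
        μ (V z.1 z.2.1 z.2.2) := by
    refine le_trans (measure_mono ?_) (measure_biUnion_finset_le _ _)
    intro ω hω
    simp only [Set.mem_iUnion]
    refine ⟨(prm ω, fun v => X ω ((prm ω).symm v), W ω), ?_, ?_⟩
    · simpa using hω
    · simp only [hV, Set.mem_ofPred_eq, true_and]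
      refine ⟨trivial, ?_, rfl⟩
      ext v : 1
      simp
  have hm : ∀ z ∈ (Finset.univ : Finset (Equiv.Perm (Fin n) × (Fin n → Fin m → Fin r) ×
        (Fin n → Fin l → Fin r))).filter (fun z => S (z.1 i0) (z.2.2, z.2.1)),
      μ (V z.1 z.2.1 z.2.2) ≤ ((n.factorial : ℝ≥0∞))⁻¹ *
        ∫⁻ p, lik m p (z.2.1 ∘ z.1) * lik l p z.2.2 * D (z.1 i0) (z.2.2, z.2.1)
          ∂(Measure.pi fun _ : Fin n => μP) := by
    intro z hz
    rw [hV, hjoint _ _ (MeasurableSet.univ.prod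
      ((measurableSet_singleton _).prod (measurableSet_singleton _)))]
    gcongr
    refine (law_le _ _ _ _ _ _ _).trans (lintegral_mono fun p => ?_)
    exact le_mul_of_one_le_right' (hSD _ _ (Finset.mem_filter.1 hz).2)
  refine (h1.trans (Finset.sum_le_sum hm)).trans ?_
  refine (Finset.sum_le_univ_sum_of_nonneg fun _ => bot_le).trans (le_of_eq ?_)
  rw [← Finset.mul_sum, ← lintegral_finsetSum, ← lintegral_const_mul]
  · refine lintegral_congr fun p => ?_
    unfold hfun
    rw [Fintype.sum_prod_type]
    simp only [Fintype.sum_prod_type]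
  · refine Finset.measurable_sum _ fun z _ => ?_
    exact ((lik_measurable _).mul (lik_measurable _)).mul_const _
  · intro z _
    exact ((lik_measurable _).mul (lik_measurable _)).mul_const _

/-- typical parameters -/
def typSet (r : ℕ) (η : ℝ) : Set (Fin (r - 1) → ℝ) :=
  {p | p ∈ simplexRegion (r - 1) ∧ ∀ i, η ≤ fullProb r p i}

/-- grid cell of a parameter vector -/
noncomputable def gridCell (d k : ℕ) (hk : 0 < k) (p : Fin d → ℝ) : Fin d → Fin k :=
  fun j => ⟨⌊(k : ℝ) * p j⌋₊ % k, Nat.mod_lt _ hk⟩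

lemma gridCell_measurable (d k : ℕ) (hk : 0 < k) : Measurable (gridCell d k hk) := by
  refine measurable_pi_lambda _ fun j => ?_
  refine (measurable_from_top (f := fun a : ℕ => (⟨a % k, Nat.mod_lt _ hk⟩ : Fin k))).comp ?_
  exact Nat.measurable_floor.comp ((measurable_pi_apply j).const_mul _)

lemma simplexRegion_measurable (d : ℕ) : MeasurableSet (simplexRegion d) := by
  have : simplexRegion d = (⋂ i, {x : Fin d → ℝ | 0 < x i}) ∩ {x | ∑ i, x i < 1} := by
    ext x; simp [simplexRegion]
  rw [this]
  refine (MeasurableSet.iInter fun i => ?_).inter ?_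
  · exact measurableSet_lt measurable_const (measurable_pi_apply i)
  · exact measurableSet_lt (by fun_prop) measurable_const

lemma typSet_measurable (r : ℕ) (η : ℝ) : MeasurableSet (typSet r η) := by
  have : typSet r η = simplexRegion (r - 1) ∩ ⋂ i, {x | η ≤ fullProb r x i} := by
    ext x; simp [typSet]
  rw [this]
  refine (simplexRegion_measurable _).inter (MeasurableSet.iInter fun i => ?_)
  exact measurableSet_le measurable_const (fullProb_measurable r i)

lemma gridCell_dist {d k : ℕ} (hk : 0 < k) (p q : Fin d → ℝ) (hp : p ∈ simplexRegion d)
    (hq : q ∈ simplexRegion d) (h : gridCell d k hk p = gridCell d k hk q) (j : Fin d) :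
    |p j - q j| ≤ 1 / k := by
  have hk' : (0 : ℝ) < k := by exact_mod_cast hk
  have aux : ∀ p ∈ simplexRegion d, ⌊(k : ℝ) * p j⌋₊ % k = ⌊(k : ℝ) * p j⌋₊ := by
    intro p hp
    have : p j < 1 := lt_of_le_of_lt
      (Finset.single_le_sum (fun i _ => (hp.1 i).le) (Finset.mem_univ j)) hp.2
    apply Nat.mod_eq_of_lt
    rw [Nat.floor_lt (mul_nonneg hk'.le (hp.1 j).le)]
    nlinarith
  have h1 := congrArg Fin.val (congrFun h j)
  simp only [gridCell] at h1
  rw [aux p hp, aux q hq] at h1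
  have a1 := Nat.floor_le (mul_nonneg hk'.le (hp.1 j).le)
  have a2 := Nat.lt_floor_add_one ((k : ℝ) * p j)
  have b1 := Nat.floor_le (mul_nonneg hk'.le (hq.1 j).le)
  have b2 := Nat.lt_floor_add_one ((k : ℝ) * q j)
  rw [h1] at a1 a2
  rw [abs_le, le_div_iff₀ hk', ← neg_div, div_le_iff₀ hk']
  constructor <;> nlinarith

lemma fullProb_dist {r : ℕ} (hr : 2 ≤ r) (p q : Fin (r - 1) → ℝ) (e : ℝ) (he : 0 ≤ e)
    (h : ∀ j, |p j - q j| ≤ e) (i : Fin r) :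
    |fullProb r p i - fullProb r q i| ≤ r * e := by
  have hr' : (1 : ℝ) ≤ r := by exact_mod_cast (by omega : 1 ≤ r)
  unfold fullProb
  split_ifs
  · have : (1 - ∑ j, p j) - (1 - ∑ j, q j) = - ∑ j, (p j - q j) := by
      rw [Finset.sum_sub_distrib]; ring
    rw [this, abs_neg]
    refine (Finset.abs_sum_le_sum_abs _ _).trans ?_
    refine (Finset.sum_le_sum fun j _ => h j).trans ?_
    simp only [Finset.sum_const, Finset.card_univ, Fintype.card_fin, nsmul_eq_mul]
    gcongr
    exact Nat.sub_le _ _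
  · refine (h _).trans ?_
    nlinarith

lemma one_n_bound {r n m l : ℕ} (hr : 2 ≤ r) (μP : Measure (Fin (r - 1) → ℝ))
    [IsProbabilityMeasure μP] (hμP : ∀ᵐ x ∂μP, x ∈ simplexRegion (r - 1)) (i0 : Fin n)
    (D : Fin n → (Fin n → Fin l → Fin r) × (Fin n → Fin m → Fin r) → ℝ≥0∞)
    (hD : ∀ v b, D v b ≤ 1) (s : ℝ≥0∞) (hDs : ∀ b, ∑ v, D v b ≤ s)
    (k K : ℕ) (hk : 0 < k) (hK : 0 < K) (η : ℝ) (hη : 0 < η) (q : ℕ) (hq : q = m ∨ q = l) :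
    ∫⁻ p, hfun D (lik m p) (lik l p) i0 ∂(Measure.pi fun _ : Fin n => μP) ≤
      μP (typSet r η)ᶜ + (K * k ^ (r - 1) : ℕ) / (n : ℝ≥0∞) + (s / K +
      ENNReal.ofReal (Real.sqrt (Real.exp (2 * (q * (r * ((r * (1 / k)) ^ 2 / η)))) - 1))) := by
  set ε := ENNReal.ofReal
    (Real.sqrt (Real.exp (2 * (q * (r * ((r * (1 / k)) ^ 2 / η)))) - 1)) with hε
  set ν := (Measure.pi fun _ : Fin n => μP) with hν
  have hae : ∀ᵐ p ∂ν, ∀ u, p u ∈ simplexRegion (r - 1) := by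
    rw [ae_all_iff]
    intro u
    exact (measurePreserving_eval (fun _ : Fin n => μP) u).quasiMeasurePreserving.ae hμP
  have hmeas : ∀ u, Measurable fun p : Fin n → Fin (r - 1) → ℝ =>
      hfun D (lik m p) (lik l p) u := by
    intro u
    unfold hfun
    refine Measurable.const_mul ?_ _
    refine Finset.measurable_sum _ fun σ _ => Finset.measurable_sum _ fun y _ =>
      Finset.measurable_sum _ fun w _ => ?_
    exact ((lik_measurable _).mul (lik_measurable _)).mul_const _
  have main := abstract_bound μP (typSet r η) (typSet_measurable r η) (gridCell (r - 1) k hk)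
    (gridCell_measurable _ _ _) i0 K hK (fun u p => hfun D (lik m p) (lik l p) u) hmeas s ε ?_ ?_ ?_
  · simpa using main
  · filter_upwards [hae] with p hp
    have := hfun_le D (lik m p) (lik l p) i0 hD
    rwa [lik_sum hr p hp, lik_sum hr p hp, one_mul] at this
  · filter_upwards [hae] with p hp
    have := hfun_sum_le D (lik m p) (lik l p) s hDs
    rwa [lik_sum hr p hp, lik_sum hr p hp, one_mul, one_mul] at this
  · intro u h hhm hsym hsupp
    have htv : ∀ p : Fin n → Fin (r - 1) → ℝ, (∀ u, p u ∈ simplexRegion (r - 1)) → h p ≠ 0 →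
        ∑ x : Fin n → Fin q → Fin r, (lik q (p ∘ Equiv.swap i0 u) x - lik q p x) ≤ ε := by
      intro p hp hne
      obtain ⟨h1, h2, h3⟩ := hsupp p hne
      refine lik_tv hr p hp i0 u η (r * (1 / k)) hη h1.2 h2.2 ?_
      exact fullProb_dist hr _ _ _ (by positivity) (gridCell_dist hk _ _ h1.1 h2.1 h3)
    have hG : ∀ p : Fin n → Fin (r - 1) → ℝ, hfun D (lik m p) (lik l p) i0 =
        hfun D (lik m (p ∘ Equiv.swap i0 u)) (lik l p) u := by
      intro p
      rw [hfun_swap D _ _ u i0]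
      simp only [lik_comp]
    have hinv : ∀ p : Fin n → Fin (r - 1) → ℝ,
        (p ∘ Equiv.swap i0 u) ∘ Equiv.swap i0 u = p := by
      intro p; ext; simp
    have fin : ∀ Gu : (Fin n → Fin (r - 1) → ℝ) → ℝ≥0∞,
        (∀ᵐ p ∂ν, h p ≠ 0 → hfun D (lik m p) (lik l p) i0 ≤ Gu p + ε) →
        ∫⁻ p, h p * hfun D (lik m p) (lik l p) i0 ∂ν ≤
          ∫⁻ p, h p * Gu p ∂ν + ε * ∫⁻ p, h p ∂ν := by
      intro Gu hGu
      rw [← lintegral_const_mul _ hhm, ← lintegral_add_right _ (hhm.const_mul _)]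
      refine lintegral_mono_ae ?_
      filter_upwards [hGu] with p hp
      by_cases h0 : h p = 0
      · simp [h0]
      · rw [mul_comm ε, ← mul_add]
        gcongr
        exact hp h0
    rcases hq with rfl | rfl
    · refine fin _ ?_
      filter_upwards [hae] with p hp h0
      rw [hG]
      refine (hfun_change_left D _ (lik q p) _ u hD).trans ?_
      rw [lik_sum hr p hp, mul_one]
      gcongr
      exact htv p hp h0
    · refine (fin (fun p => hfun D (lik m (p ∘ Equiv.swap i0 u))
        (lik q (p ∘ Equiv.swap i0 u)) u) ?_).trans (le_of_eq ?_)
      · filter_upwards [hae] with p hp h0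
        rw [hG]
        refine (hfun_change_right D _ _ (lik q (p ∘ Equiv.swap i0 u)) u hD).trans ?_
        have hp' : ∀ v, (p ∘ Equiv.swap i0 u) v ∈ simplexRegion (r - 1) := fun v => hp _
        rw [lik_sum hr _ hp', one_mul]
        gcongr
        have := htv (p ∘ Equiv.swap i0 u) hp' (by rwa [hsym])
        rwa [hinv] at this
      · congr 1
        rw [← lintegral_perm μP (Equiv.swap i0 u) (fun p => h p * hfun D (lik m p) (lik q p) u)]
        simp only [hsym]
        rfl

lemma typSet_exists (r : ℕ) (μP : Measure (Fin (r - 1) → ℝ)) [IsProbabilityMeasure μP]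
    (hμP : ∀ᵐ x ∂μP, x ∈ simplexRegion (r - 1)) :
    ∃ η : ℝ, 0 < η ∧ μP (typSet r η)ᶜ ≤ ENNReal.ofReal (1 / 8) := by
  have hanti : Antitone fun j : ℕ => (typSet r (1 / ((j : ℝ) + 1)))ᶜ := by
    intro a b hab
    refine Set.compl_subset_compl.2 ?_
    rintro p ⟨h1, h2⟩
    exact ⟨h1, fun i => (one_div_le_one_div_of_le (by positivity)
      (by gcongr)).trans (h2 i)⟩
  have h := tendsto_measure_iInter_atTop (μ := μP)
    (fun j : ℕ => (typSet_measurable r (1 / ((j : ℝ) + 1))).compl.nullMeasurableSet) hanti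
    ⟨0, measure_ne_top _ _⟩
  have hz : μP (⋂ j : ℕ, (typSet r (1 / ((j : ℝ) + 1)))ᶜ) = 0 := by
    refine measure_mono_null ?_ hμP
    intro p hp hps
    rw [Set.mem_iInter] at hp
    have : ∃ j : ℕ, ∀ i, 1 / ((j : ℝ) + 1) ≤ fullProb r p i := by
      have : ∀ i, ∀ᶠ j : ℕ in atTop, 1 / ((j : ℝ) + 1) < fullProb r p i := fun i =>
        (tendsto_one_div_add_atTop_nhds_zero_nat (𝕜 := ℝ)).eventually_lt_const (fullProb_pos p hps i)
      obtain ⟨j, hj⟩ := (eventually_all.2 this).exists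
      exact ⟨j, fun i => (hj i).le⟩
    obtain ⟨j, hj⟩ := this
    exact hp j ⟨hps, hj⟩
  rw [hz] at h
  obtain ⟨j, hj⟩ := (h.eventually_lt_const (u := ENNReal.ofReal (1 / 8)) (by simp)).exists
  exact ⟨1 / ((j : ℝ) + 1), by positivity, hj.le⟩

lemma ae_simplex {d : ℕ} (f : (Fin d → ℝ) → ℝ) (μP : Measure (Fin d → ℝ))
    (hμP : μP = volume.withDensity fun x => ENNReal.ofReal (f x))
    (hf0 : ∀ x ∉ simplexRegion d, f x = 0) : ∀ᵐ x ∂μP, x ∈ simplexRegion d := by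
  change μP (simplexRegion d)ᶜ = 0
  rw [hμP, withDensity_apply _ (simplexRegion_measurable d).compl]
  rw [setLIntegral_congr_fun (g := fun _ => 0) (simplexRegion_measurable d).compl]
  · simp
  · intro x hx
    simp [hf0 x hx]

lemma entropy_n {r n m l : ℕ} (hr : 2 ≤ r) (μP : Measure (Fin (r - 1) → ℝ))
    [IsProbabilityMeasure μP] (hμP : ∀ᵐ x ∂μP, x ∈ simplexRegion (r - 1)) (hn : 0 < n)
    {Ω : Type} [MeasurableSpace Ω] (μ : Measure Ω) [IsProbabilityMeasure μ]
    (P : Ω → Fin n → Fin (r - 1) → ℝ)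
    (X : Ω → Fin n → Fin m → Fin r) (W : Ω → Fin n → Fin l → Fin r)
    (prm : Ω → Equiv.Perm (Fin n))
    (hprm : ∀ (σ : Equiv.Perm (Fin n)), MeasurableSet {ω | prm ω = σ})
    (hjoint : ∀ (σ : Equiv.Perm (Fin n))
        (s : Set ((Fin n → Fin (r - 1) → ℝ) ×
          (Fin n → Fin m → Fin r) × (Fin n → Fin l → Fin r))),
        MeasurableSet s →
        μ {ω | prm ω = σ ∧ (P ω, X ω, W ω) ∈ s} =
          ((n.factorial : ℝ≥0∞))⁻¹ * rStateLaw n m l r μP s)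
    (t : ℝ) (ht : 0 < t) (ht1 : t < 1) (k K : ℕ) (hk : 0 < k) (hK : 8 / t ≤ K)
    (η : ℝ) (hη : 0 < η) (hηT : μP (typSet r η)ᶜ ≤ ENNReal.ofReal (1 / 8))
    (q : ℕ) (hq : q = m ∨ q = l)
    (hkn : (K : ℝ) * ((k : ℝ) ^ (r - 1) / n) ≤ 1 / 8)
    (hqk : Real.sqrt (Real.exp (2 * (q * (r * ((r * (1 / k)) ^ 2 / η)))) - 1) ≤ 1 / 8) :
    -Real.log t * (1 / 2) ≤ shCondEntropy μ
      (fun ω => if hn : 0 < n then ((prm ω ⟨0, hn⟩ : Fin n) : ℕ) else 0)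
      (fun ω => (W ω, fun v => X ω ((prm ω).symm v))) := by
  classical
  set A : Ω → ℕ := fun ω => if hn : 0 < n then ((prm ω ⟨0, hn⟩ : Fin n) : ℕ) else 0 with hA
  set B : Ω → (Fin n → Fin l → Fin r) × (Fin n → Fin m → Fin r) :=
    fun ω => (W ω, fun v => X ω ((prm ω).symm v)) with hB
  have hA' : ∀ ω, A ω = (prm ω ⟨0, hn⟩ : Fin n) := fun ω => by simp [hA, hn]
  have hAm : ∀ a, MeasurableSet (A ⁻¹' {a}) := by
    intro a
    have : A ⁻¹' {a} = ⋃ σ ∈ {σ : Equiv.Perm (Fin n) | (σ ⟨0, hn⟩ : ℕ) = a},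
        {ω | prm ω = σ} := by
      ext ω; simp [hA']
    rw [this]
    exact MeasurableSet.biUnion (Set.to_countable _) fun σ _ => hprm σ
  set S : Fin n → (Fin n → Fin l → Fin r) × (Fin n → Fin m → Fin r) → Prop := fun v b =>
    t * (μ (B ⁻¹' {b})).toReal < (μ (A ⁻¹' {(v : ℕ)} ∩ B ⁻¹' {b})).toReal with hS
  set D : Fin n → (Fin n → Fin l → Fin r) × (Fin n → Fin m → Fin r) → ℝ≥0∞ := fun v b =>
    if S v b then 1 else 0 with hD
  have hDs : ∀ b, ∑ v, D v b ≤ ENNReal.ofReal (1 / t) := by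
    intro b
    have h1 : ∑ v : Fin n, (μ (A ⁻¹' {(v : ℕ)} ∩ B ⁻¹' {b})).toReal ≤ (μ (B ⁻¹' {b})).toReal := by
      rw [← ENNReal.toReal_sum fun _ _ => measure_ne_top _ _]
      refine ENNReal.toReal_mono (measure_ne_top _ _) ?_
      simp only [← Measure.restrict_apply (hAm _)]
      rw [← measure_biUnion_finset]
      · refine (measure_mono (Set.subset_univ _)).trans ?_
        simp
      · intro v _ v' _ hvv
        refine Set.disjoint_left.2 fun ω h1 h2 => hvv ?_
        simp only [Set.mem_preimage, Set.mem_singleton_iff] at h1 h2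
        exact Fin.ext (h1.symm.trans h2)
      · exact fun v _ => hAm _
    set N := (Finset.univ.filter fun v => S v b).card with hN
    have h2 : ∑ v, D v b = (N : ℝ≥0∞) := by
      simp [hD, hN]
    rw [h2, ← ENNReal.ofReal_natCast]
    apply ENNReal.ofReal_le_ofReal
    rcases (ENNReal.toReal_nonneg : 0 ≤ (μ (B ⁻¹' {b})).toReal).eq_or_lt with h0 | h0
    · have : N = 0 := by
        rw [hN, Finset.card_eq_zero, Finset.filter_eq_empty_iff]
        intro v _
        simp only [hS, not_lt]
        have : (μ (A ⁻¹' {(v : ℕ)} ∩ B ⁻¹' {b})).toReal ≤ (μ (B ⁻¹' {b})).toReal :=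
          ENNReal.toReal_mono (measure_ne_top _ _) (measure_mono Set.inter_subset_right)
        rw [← h0] at this ⊢
        linarith
      rw [this]; simp; positivity
    · have h3 : (N : ℝ) * (t * (μ (B ⁻¹' {b})).toReal) ≤
          ∑ v : Fin n, (μ (A ⁻¹' {(v : ℕ)} ∩ B ⁻¹' {b})).toReal := by
        rw [hN, ← nsmul_eq_mul]
        refine (Finset.card_nsmul_le_sum _ _ _ ?_).trans
          (Finset.sum_le_univ_sum_of_nonneg fun _ => ENNReal.toReal_nonneg)
        intro v hv
        exact (Finset.mem_filter.1 hv).2.le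
      rw [le_div_iff₀ ht]
      have : (N : ℝ) * t * (μ (B ⁻¹' {b})).toReal ≤ 1 * (μ (B ⁻¹' {b})).toReal := by
        linarith
      exact le_of_mul_le_mul_right this h0
  have hKr : (0 : ℝ) < K := lt_of_lt_of_le (by positivity) hK
  have hK0 : 0 < K := by exact_mod_cast hKr
  have hnr : (0 : ℝ) < n := by exact_mod_cast hn
  have hb1 := prob_le μP ⟨0, hn⟩ μ P X W prm hjoint S D (fun v b h => by simp [hD, h])
  have hb2 := one_n_bound hr μP hμP ⟨0, hn⟩ D (fun v b => by simp only [hD]; split_ifs <;> simp)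
    (ENNReal.ofReal (1 / t)) hDs k K hk hK0 η hη q hq
  have e1 : ((K * k ^ (r - 1) : ℕ) : ℝ≥0∞) / (n : ℝ≥0∞) ≤ ENNReal.ofReal (1 / 8) := by
    rw [← ENNReal.ofReal_natCast, ← ENNReal.ofReal_natCast n, ← ENNReal.ofReal_div_of_pos hnr]
    apply ENNReal.ofReal_le_ofReal
    push_cast
    rw [mul_div_assoc]
    exact hkn
  have e2 : ENNReal.ofReal (1 / t) / (K : ℝ≥0∞) ≤ ENNReal.ofReal (1 / 8) := by
    rw [← ENNReal.ofReal_natCast, ← ENNReal.ofReal_div_of_pos hKr]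
    apply ENNReal.ofReal_le_ofReal
    rw [div_le_iff₀ ht] at hK
    rw [div_div, div_le_div_iff₀ (by positivity) (by norm_num)]
    linarith
  have hbad : (μ {ω | S (prm ω ⟨0, hn⟩) (B ω)}).toReal ≤ 1 / 2 := by
    have : μ {ω | S (prm ω ⟨0, hn⟩) (B ω)} ≤ ENNReal.ofReal (1 / 2) := by
      refine (hb1.trans hb2).trans ?_
      refine (add_le_add (add_le_add hηT e1)
        (add_le_add e2 (ENNReal.ofReal_le_ofReal hqk))).trans (le_of_eq ?_)
      rw [← ENNReal.ofReal_add (by norm_num) (by norm_num),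
        ← ENNReal.ofReal_add (by norm_num) (by norm_num)]
      norm_num
    exact ENNReal.toReal_le_of_le_ofReal (by norm_num) this
  have hent := entropy_lb μ A B n (fun ω => by rw [hA']; exact Fin.isLt _) t ht ht1
  refine le_trans ?_ hent
  have hlog : 0 ≤ -Real.log t := by
    have := Real.log_neg ht ht1; linarith
  refine mul_le_mul_of_nonneg_left ?_ hlog
  have : {ω | t * (μ (B ⁻¹' {B ω})).toReal < (μ (A ⁻¹' {A ω} ∩ B ⁻¹' {B ω})).toReal} =
      {ω | S (prm ω ⟨0, hn⟩) (B ω)} := by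
    ext ω
    simp only [Set.mem_ofPred_eq, hS, hA' ω]
  rw [this]
  linarith

lemma asymp_k (d : ℕ) (hd : 0 < d) (α : ℝ) (hα : 0 < α) :
    Tendsto (fun n : ℕ => ((⌈(n : ℝ) ^ (1 / (d : ℝ) - α / 4)⌉₊ : ℕ) : ℝ) ^ d / n)
      atTop (nhds 0) := by
  have hd' : (0 : ℝ) < d := by exact_mod_cast hd
  have h1 : Tendsto (fun n : ℕ => ((n : ℝ) ^ (-(α / 4)) + (n : ℝ) ^ (-(1 / (d : ℝ)))) ^ d)
      atTop (nhds 0) := by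
    have a := (tendsto_rpow_neg_atTop (show 0 < α / 4 by positivity)).comp
      (tendsto_natCast_atTop_atTop (R := ℝ))
    have b := (tendsto_rpow_neg_atTop (show 0 < 1 / (d : ℝ) by positivity)).comp
      (tendsto_natCast_atTop_atTop (R := ℝ))
    have := (a.add b).pow d
    simpa [hd.ne'] using this
  refine squeeze_zero' (Eventually.of_forall fun n => by positivity) ?_ h1
  filter_upwards [eventually_gt_atTop 0] with n hn
  have hx : (0 : ℝ) < n := by exact_mod_cast hn
  have e : (n : ℝ) = ((n : ℝ) ^ (1 / (d : ℝ))) ^ d := by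
    rw [← Real.rpow_natCast, ← Real.rpow_mul hx.le]
    field_simp
    simp
  have e2 : ((⌈(n : ℝ) ^ (1 / (d : ℝ) - α / 4)⌉₊ : ℕ) : ℝ) ^ d / n =
      (((⌈(n : ℝ) ^ (1 / (d : ℝ) - α / 4)⌉₊ : ℕ) : ℝ) / (n : ℝ) ^ (1 / (d : ℝ))) ^ d := by
    rw [div_pow, ← e]
  rw [e2]
  refine pow_le_pow_left₀ (by positivity) ?_ d
  rw [div_le_iff₀ (by positivity), add_mul, ← Real.rpow_add hx, ← Real.rpow_add hx]
  have := (Nat.ceil_lt_add_one (a := (n : ℝ) ^ (1 / (d : ℝ) - α / 4)) (by positivity)).le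
  refine this.trans (le_of_eq ?_)
  rw [neg_add_cancel, Real.rpow_zero]
  congr 2
  ring

lemma asymp_q (d : ℕ) (c α : ℝ) (hα : 0 < α) (q : ℕ → ℕ)
    (hq : ∀ n : ℕ, (q n : ℝ) ≤ c * (n : ℝ) ^ (2 / (d : ℝ) - α)) :
    Tendsto (fun n : ℕ => (q n : ℝ) * (1 / ((⌈(n : ℝ) ^ (1 / (d : ℝ) - α / 4)⌉₊ : ℕ) : ℝ)) ^ 2)
      atTop (nhds 0) := by
  have h1 : Tendsto (fun n : ℕ => c * (n : ℝ) ^ (-(α / 2))) atTop (nhds 0) := by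
    have a := (tendsto_rpow_neg_atTop (show 0 < α / 2 by positivity)).comp
      (tendsto_natCast_atTop_atTop (R := ℝ))
    simpa using a.const_mul c
  refine squeeze_zero' (Eventually.of_forall fun n => by positivity) ?_ h1
  filter_upwards [eventually_gt_atTop 0] with n hn
  have hx : (0 : ℝ) < n := by exact_mod_cast hn
  have hk := Nat.le_ceil ((n : ℝ) ^ (1 / (d : ℝ) - α / 4))
  set k := ((⌈(n : ℝ) ^ (1 / (d : ℝ) - α / 4)⌉₊ : ℕ) : ℝ)
  have hp : 0 < (n : ℝ) ^ (1 / (d : ℝ) - α / 4) := by positivity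
  have hc : 0 ≤ c * (n : ℝ) ^ (2 / (d : ℝ) - α) := le_trans (by positivity) (hq n)
  calc (q n : ℝ) * (1 / k) ^ 2
      ≤ (c * (n : ℝ) ^ (2 / (d : ℝ) - α)) * (1 / (n : ℝ) ^ (1 / (d : ℝ) - α / 4)) ^ 2 := by
        gcongr
        exact hq n
    _ = c * (n : ℝ) ^ (-(α / 2)) := by
        rw [one_div, ← Real.rpow_neg hx.le, ← Real.rpow_natCast, ← Real.rpow_mul hx.le, mul_assoc,
          ← Real.rpow_add hx]
        congr 2
        push_cast
        ring

/-- **`r`-state i.i.d. model, perfect anonymity.**  If at least one of the trace lengths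
`m n`, `l n` is at most `c * n ^ (2/(r-1) - α)` for some `c, α > 0`, then
`H(Π(1) | W, Y) → ∞` as `n → ∞`, where `Y` is the anonymized version of `X`
(`Y_{Π(u)} = X_u`, i.e. `Y v = X (Π⁻¹ v)`) and `Π` is a uniformly random permutation
independent of the data. -/
theorem r_state_perfect_anonymity
    (r : ℕ) (hr : 2 ≤ r)
    (f : (Fin (r - 1) → ℝ) → ℝ) (δ₁ δ₂ : ℝ) (hδ₁ : 0 < δ₁)
    (μP : Measure (Fin (r - 1) → ℝ)) [IsProbabilityMeasure μP]
    (hμP : μP = volume.withDensity fun x => ENNReal.ofReal (f x))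
    (hf0 : ∀ x ∉ simplexRegion (r - 1), f x = 0)
    (hf : ∀ x ∈ simplexRegion (r - 1), δ₁ < f x ∧ f x < δ₂)
    (m l : ℕ → ℕ) (c α : ℝ) (hc : 0 < c) (hα : 0 < α)
    (hml : (∀ n : ℕ, (m n : ℝ) ≤ c * (n : ℝ) ^ (2 / ((r : ℝ) - 1) - α)) ∨
           (∀ n : ℕ, (l n : ℝ) ≤ c * (n : ℝ) ^ (2 / ((r : ℝ) - 1) - α)))
    (Ω : ℕ → Type) (mΩ : ∀ n, MeasurableSpace (Ω n))
    (μ : ∀ n, Measure (Ω n)) (hμ : ∀ n, IsProbabilityMeasure (μ n))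
    (P : ∀ n, Ω n → Fin n → Fin (r - 1) → ℝ)
    (X : ∀ n, Ω n → Fin n → Fin (m n) → Fin r)
    (W : ∀ n, Ω n → Fin n → Fin (l n) → Fin r)
    (prm : ∀ n, Ω n → Equiv.Perm (Fin n))
    (hP : ∀ n, Measurable (P n)) (hX : ∀ n, Measurable (X n))
    (hW : ∀ n, Measurable (W n))
    (hprm : ∀ n (σ : Equiv.Perm (Fin n)), MeasurableSet {ω | prm n ω = σ})
    -- `Π` is uniform on the `n!` permutations, independent of `(P, X, W)`, and
    -- `(P, X, W)` has the `r`-state i.i.d. law described above: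
    (hjoint : ∀ n (σ : Equiv.Perm (Fin n))
        (s : Set ((Fin n → Fin (r - 1) → ℝ) ×
          (Fin n → Fin (m n) → Fin r) × (Fin n → Fin (l n) → Fin r))),
        MeasurableSet s →
        μ n {ω | prm n ω = σ ∧ (P n ω, X n ω, W n ω) ∈ s} =
          ((n.factorial : ℝ≥0∞))⁻¹ * rStateLaw n (m n) (l n) r μP s) :
    Tendsto (fun n =>
        shCondEntropy (μ n)
          (fun ω => if hn : 0 < n then ((prm n ω ⟨0, hn⟩ : Fin n) : ℕ) else 0)
          (fun ω => (W n ω, fun v => X n ω ((prm n ω).symm v))))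
      atTop atTop := by
  have hsimp := ae_simplex f μP hμP hf0
  obtain ⟨η, hη, hηT⟩ := typSet_exists r μP hsimp
  obtain ⟨q, hqml, hqle⟩ : ∃ q : ℕ → ℕ, (∀ n, q n = m n ∨ q n = l n) ∧
      ∀ n : ℕ, (q n : ℝ) ≤ c * (n : ℝ) ^ (2 / ((r - 1 : ℕ) : ℝ) - α) := by
    have e : ((r - 1 : ℕ) : ℝ) = (r : ℝ) - 1 := by
      rw [Nat.cast_sub (by omega)]; simp
    rcases hml with h | h
    · exact ⟨m, fun n => Or.inl rfl, by rw [e]; exact h⟩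
    · exact ⟨l, fun n => Or.inr rfl, by rw [e]; exact h⟩
  have hk1 := asymp_k (r - 1) (by omega) α hα
  have hq1 := asymp_q (r - 1) c α hα q hqle
  set k : ℕ → ℕ := fun n => ⌈(n : ℝ) ^ (1 / ((r - 1 : ℕ) : ℝ) - α / 4)⌉₊ with hk
  rw [tendsto_atTop]
  intro b
  set t : ℝ := Real.exp (-(2 * (|b| + 1))) with ht
  have ht0 : 0 < t := Real.exp_pos _
  have ht1 : t < 1 := by
    rw [ht, Real.exp_lt_one_iff]
    have := abs_nonneg b
    linarith
  set K : ℕ := ⌈8 / t⌉₊ with hK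
  have hk2 : Tendsto (fun n => (K : ℝ) * ((k n : ℝ) ^ (r - 1) / n)) atTop (nhds 0) := by
    have := hk1.const_mul (K : ℝ)
    rwa [mul_zero] at this
  have hq2 : Tendsto (fun n => Real.sqrt (Real.exp
      (2 * (q n * (r * ((r * (1 / (k n : ℝ))) ^ 2 / η)))) - 1)) atTop (nhds 0) := by
    have h1 : Tendsto (fun n => 2 * (q n * (r * ((r * (1 / (k n : ℝ))) ^ 2 / η))))
        atTop (nhds 0) := by
      have := hq1.const_mul (2 * ((r : ℝ) * (r : ℝ) ^ 2 / η))
      rw [mul_zero] at this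
      refine this.congr fun n => ?_
      rw [mul_pow]
      ring
    have h2 := ((Real.continuous_exp.tendsto 0).comp h1).sub_const 1
    have h3 := (Real.continuous_sqrt.tendsto _).comp h2
    have e : Real.sqrt (Real.exp 0 - 1) = 0 := by simp
    rw [e] at h3
    exact h3
  filter_upwards [eventually_gt_atTop 0, hk2.eventually_le_const (show (0 : ℝ) < 1 / 8 by norm_num),
    hq2.eventually_le_const (show (0 : ℝ) < 1 / 8 by norm_num)] with n hn h1 h2
  have hnr : (0 : ℝ) < n := by exact_mod_cast hn
  have hkpos : 0 < k n := Nat.ceil_pos.2 (by positivity)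
  have := hμ n
  have := entropy_n hr μP hsimp hn (μ n) (P n) (X n) (W n) (prm n) (hprm n) (hjoint n) t ht0 ht1
    (k n) K hkpos (Nat.le_ceil _) η hη hηT (q n) (hqml n) h1 h2
  refine le_trans ?_ this
  rw [ht, Real.log_exp]
  have := le_abs_self b
  linarith
end
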